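/- Let f, Γ, f̂ and h be as in the blow-up construction for a quasiperiodically forced increasing interval map (Theorem 4.1): f̂ is a topological extension of f via h and h^{-1}(Γ) is the pinched preimage of the invariant curve Γ. Then h^{-1}(Γ) contains exactly one minimal set of f̂; this minimal set is almost automorphic, not almost periodic, and not filled-in. -/

import Mathlib

open Set Function MeasureTheory

noncomputable section

/-- The circle `T¹ = ℝ/ℤ`. -/
abbrev T1 := AddCircle (1 : ℝ)

/-- The `n`-th iterate (`n ∈ ℤ`) of a bijection. -/
def zIter {X : Type*} (g : Equiv.Perm X) (n : ℤ) : X → X := fun x => (g ^ n) x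

/-- A set of integers is syndetic if it has bounded gaps. -/
def ZSyndetic (S : Set ℤ) : Prop := ∃ N : ℕ, ∀ n : ℤ, ∃ k ∈ S, |k - n| ≤ (N : ℤ)

/-- A homeomorphism `α` of a metric space is almost periodic if for every `ε > 0` the set
`{n ∈ ℤ | dist(αⁿ, Id) < ε}` is syndetic. -/
def AlmostPeriodicHomeo {Θ : Type*} [MetricSpace Θ] (α : Θ ≃ₜ Θ) : Prop :=
  ∀ ε > (0 : ℝ), ZSyndetic {n : ℤ | ∀ θ : Θ, dist (zIter α.toEquiv n θ) θ < ε}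

/-- A homeomorphism is minimal if every (two-sided) orbit is dense. -/
def MinimalHomeo {Θ : Type*} [TopologicalSpace Θ] (α : Θ ≃ₜ Θ) : Prop :=
  ∀ θ : Θ, Dense (range fun n : ℤ => zIter α.toEquiv n θ)

/-- A self-map `g` of a metric space is almost periodic if its family of iterates
is (uniformly) equicontinuous. -/
def AlmostPeriodicMap {Y : Type*} [MetricSpace Y] (g : Y → Y) : Prop :=
  ∀ ε > (0 : ℝ), ∃ δ > (0 : ℝ), ∀ y y' : Y, dist y y' < δ → ∀ n : ℕ, dist (g^[n] y) (g^[n] y') < ε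

/-- `h` is a factor map (semiconjugacy) from `(X, f)` onto `(Y, g)`:
a continuous surjection with `h ∘ f = g ∘ h`.  Then `(X, f)` is a topological
extension of `(Y, g)`. -/
def IsFactorMap {X Y : Type*} [TopologicalSpace X] [TopologicalSpace Y]
    (f : X → X) (g : Y → Y) (h : X → Y) : Prop :=
  Continuous h ∧ Surjective h ∧ h ∘ f = g ∘ h

/-- A map `h` is almost 1-1 if the set of points of the target having exactly one
preimage is dense. -/
def AlmostOneOne {X Y : Type*} [TopologicalSpace Y] (h : X → Y) : Prop :=
  Dense {y : Y | ∃! x, h x = y}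

/-- A witness that the system `(X, f)` is almost automorphic: an almost periodic
homeomorphism of a compact metric space which is an almost 1-1 factor of `(X, f)`. -/
structure AAWitness {X : Type*} [TopologicalSpace X] (f : X → X) where
  (Y : Type)
  [mY : MetricSpace Y]
  [cY : CompactSpace Y]
  (g : Y ≃ₜ Y)
  (hmap : X → Y)
  (factor : IsFactorMap f (⇑g) hmap)
  (a11 : AlmostOneOne hmap)
  (ap : ∀ ε > (0 : ℝ), ∃ δ > (0 : ℝ), ∀ y y' : Y, dist y y' < δ →
        ∀ n : ℤ, dist (zIter g.toEquiv n y) (zIter g.toEquiv n y') < ε)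

/-- `M` is a minimal set of `f`: nonempty, closed, invariant, and without proper
nonempty closed invariant subsets. -/
def IsMinimalSet {X : Type*} [TopologicalSpace X] (f : X → X) (M : Set X) : Prop :=
  M.Nonempty ∧ IsClosed M ∧ f '' M = M ∧
    ∀ M' ⊆ M, M'.Nonempty → IsClosed M' → f '' M' ⊆ M' → M' = M

/-- The restriction of `f` to an invariant set. -/
def restrictMap {X : Type*} {f : X → X} {M : Set X} (hM : Set.MapsTo f M M) : ↥M → ↥M :=
  Set.MapsTo.restrict f M M hM

/-- `M` is an almost automorphic minimal set of `f`: `f` restricted to `M` admits an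
almost periodic almost 1-1 factor. -/
def IsAAMinimal {X : Type*} [MetricSpace X] (f : X → X) (M : Set X) : Prop :=
  IsMinimalSet f M ∧ ∀ hM : Set.MapsTo f M M, Nonempty (AAWitness (restrictMap hM))

/-- `M` is an almost periodic minimal set of `f`: the family of iterates of the
restriction of `f` to `M` is equicontinuous. -/
def IsAPMinimal {X : Type*} [MetricSpace X] (f : X → X) (M : Set X) : Prop :=
  IsMinimalSet f M ∧ ∀ hM : Set.MapsTo f M M, AlmostPeriodicMap (restrictMap hM)

/-- A subset of a product is pinched if some fibre is a singleton. -/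
def Pinched {Θ X : Type*} (A : Set (Θ × X)) : Prop := ∃ θ : Θ, ∃! x : X, (θ, x) ∈ A

/-- An `α`-forced increasing interval map on `Θ × I`: a continuous skew product over `α`
whose fibre maps are strictly increasing. -/
def ForcedIncreasing {Θ : Type*} [TopologicalSpace Θ] {I : Set ℝ} (α : Θ → Θ)
    (f : Θ × ↥I → Θ × ↥I) : Prop :=
  Continuous f ∧ (∀ p : Θ × ↥I, (f p).1 = α p.1) ∧
    ∀ θ : Θ, StrictMono fun x : ↥I => (f (θ, x)).2

/-- The fibre of `M ⊆ Θ × I` over `θ`, as a set of reals. -/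
def fiberSet {Θ : Type*} {I : Set ℝ} (M : Set (Θ × ↥I)) (θ : Θ) : Set ℝ :=
  (fun x : ↥I => (x : ℝ)) '' {x : ↥I | (θ, x) ∈ M}

/-- The filled-in envelope `[φ⁻_M, φ⁺_M]` of `M`, where `φ⁻_M(θ) = inf M_θ` and
`φ⁺_M(θ) = sup M_θ`. -/
def FilledEnvelope {Θ : Type*} {I : Set ℝ} (M : Set (Θ × ↥I)) : Set (Θ × ↥I) :=
  {p : Θ × ↥I | sInf (fiberSet M p.1) ≤ (p.2 : ℝ) ∧ (p.2 : ℝ) ≤ sSup (fiberSet M p.1)}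

/-- The graph of a curve `γ : Θ → I`. -/
def curveGraph {Θ : Type*} {I : Set ℝ} (γ : Θ → ↥I) : Set (Θ × ↥I) :=
  {p : Θ × ↥I | p.2 = γ p.1}

/-- The conclusion of the blow-up construction (properties (i)-(v) of the main theorem):
`f̂` is a topological extension of `f` via the fibre-respecting factor map `h`, `f̂` is an
`α`-forced increasing interval map, the fibre maps of `h` are non-decreasing, `h` is
injective off `h⁻¹(Γ)`, countably many points of `Γ` have non-degenerate vertical-segment
preimages while all other points of `Γ` have singleton preimages, and `h⁻¹(Γ)` contains
the graph of no continuous curve. -/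
def BlowUpConclusion {Θ : Type*} [TopologicalSpace Θ] {I : Set ℝ}
    (α : Θ → Θ) (f : Θ × ↥I → Θ × ↥I) (γ : Θ → ↥I)
    (fhat : Θ × ↥I → Θ × ↥I) (h : Θ × ↥I → Θ × ↥I) : Prop :=
  IsFactorMap fhat f h ∧ (∀ p : Θ × ↥I, (h p).1 = p.1) ∧
  ForcedIncreasing α fhat ∧
  (∀ θ : Θ, Monotone fun x : ↥I => (h (θ, x)).2) ∧
  Set.InjOn h (h ⁻¹' curveGraph γ)ᶜ ∧
  (∃ C : Set (Θ × ↥I), C ⊆ curveGraph γ ∧ C.Countable ∧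
    (∀ p ∈ C, ∃ x₁ x₂ : ↥I, x₁ < x₂ ∧ h ⁻¹' {p} = {p.1} ×ˢ Set.Icc x₁ x₂) ∧
    (∀ p ∈ curveGraph γ \ C, ∃ x : ↥I, h ⁻¹' {p} = {(p.1, x)})) ∧
  (∀ η : Θ → ↥I, Continuous η → ¬ (curveGraph η ⊆ h ⁻¹' curveGraph γ))

/-!
The discontinuity `w ↦ sign w` can be resolved at a single point by the quotient
`(w + u θ) / (|w| + v θ)`, where `u / v` is a function on the base that is continuous outside `0`
and takes both values `1` and `-1` arbitrarily near `0`: the quotient is continuous and monotone in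
`w` away from `θ = 0`, `w = 0`, where it becomes indeterminate. With `w` replaced by a height above
the curve that is invariant under `f`, we do this simultaneously at all points of the curve over
the orbit of `0`. Adjoining the values of these countably many quotients to the points of the
cylinder replaces each such point of the curve by a segment; a summable weighting of the quotients
turns each fibre of the resulting space back into an interval, so that this space is again
a cylinder, and `f` extends to it by shifting the quotients.

Over the complement of the orbit of `0` the preimage of the curve is a graph, whose closure `M` is
therefore the only minimal set there and an almost one-to-one extension of the rotation. Along this
graph the quotient belonging to `0` equals `u / v`, so over `0` the fibre of `M` consists of points
where it is `1` or `-1`, and both values occur: it is neither a point nor a segment. An almost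
periodic `M` would be the graph of a continuous curve, as it has singleton fibres.
-/

open Filter Topology

/-! ### Minimal sets of skew products over a minimal rotation -/

section Rotation

variable {Θ Y : Type*} [AddCommGroup Θ] [TopologicalSpace Θ] [ContinuousAdd Θ] {ρ : Θ}

lemma eq_univ_of_isClosed_of_mapsTo_add_right (hρ : DenseRange fun n : ℕ => n • ρ) {E : Set Θ}
    (hE : IsClosed E) (hne : E.Nonempty) (hinv : MapsTo (· + ρ) E E) : E = univ := by
  obtain ⟨θ, hθ⟩ := hne
  have horbit : ∀ n : ℕ, θ + n • ρ ∈ E := fun n => by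
    simpa only [add_right_iterate] using hinv.iterate n hθ
  have hdense : DenseRange fun n : ℕ => θ + n • ρ :=
    (Homeomorph.addLeft θ).surjective.denseRange.comp hρ (Homeomorph.addLeft θ).continuous
  rw [← hE.closure_eq]
  exact (hdense.mono (range_subset_iff.2 horbit)).closure_eq

variable [CompactSpace Θ] [T2Space Θ] [TopologicalSpace Y] [CompactSpace Y]
  {g : Θ × Y → Θ × Y} {P M : Set (Θ × Y)} {S : Set Θ}

lemma image_fst_eq_univ_of_mapsTo (hρ : DenseRange fun n : ℕ => n • ρ)
    (hg : Semiconj Prod.fst g (· + ρ)) (hM : IsClosed M) (hne : M.Nonempty)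
    (hinv : MapsTo g M M) : Prod.fst '' M = univ := by
  refine eq_univ_of_isClosed_of_mapsTo_add_right hρ
    (hM.isCompact.image continuous_fst).isClosed (hne.image _) ?_
  rintro _ ⟨p, hp, rfl⟩
  exact ⟨g p, hinv hp, hg p⟩

lemma closure_inter_preimage_fst_subset (hρ : DenseRange fun n : ℕ => n • ρ)
    (hg : Semiconj Prod.fst g (· + ρ)) (hPS : InjOn Prod.fst (P ∩ Prod.fst ⁻¹' S))
    (hMP : M ⊆ P) (hM : IsClosed M) (hne : M.Nonempty) (hinv : MapsTo g M M) :
    closure (P ∩ Prod.fst ⁻¹' S) ⊆ M := by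
  refine closure_minimal (fun p hp => ?_) hM
  obtain ⟨q, hq, hqp⟩ : p.1 ∈ Prod.fst '' M := by
    rw [image_fst_eq_univ_of_mapsTo hρ hg hM hne hinv]
    exact mem_univ _
  have hqS : q ∈ P ∩ Prod.fst ⁻¹' S := ⟨hMP hq, by rw [mem_preimage, hqp]; exact hp.2⟩
  rwa [← hPS hqS hp hqp]

lemma isMinimalSet_closure_inter_preimage_fst [T2Space Y] (hρ : DenseRange fun n : ℕ => n • ρ)
    (hg : Semiconj Prod.fst g (· + ρ)) (hgc : Continuous g)
    (hPS : InjOn Prod.fst (P ∩ Prod.fst ⁻¹' S)) (hP : IsClosed P) (hPne : P.Nonempty)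
    (hPinv : MapsTo g P P) (hS : S.Nonempty) (hSinv : MapsTo (· + ρ) S S) :
    IsMinimalSet g (closure (P ∩ Prod.fst ⁻¹' S)) := by
  set M := closure (P ∩ Prod.fst ⁻¹' S)
  have hMP : M ⊆ P := closure_minimal inter_subset_left hP
  have hinv : MapsTo g M M := by
    refine MapsTo.closure (fun p hp => ⟨hPinv hp.1, ?_⟩) hgc
    rw [mem_preimage, hg p]
    exact hSinv hp.2
  have hne : M.Nonempty := by
    obtain ⟨θ, hθ⟩ := hS
    obtain ⟨p, hp, rfl⟩ : θ ∈ Prod.fst '' P := by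
      rw [image_fst_eq_univ_of_mapsTo hρ hg hP hPne hPinv]
      exact mem_univ θ
    exact ⟨p, subset_closure ⟨hp, hθ⟩⟩
  have hleast : ∀ M' ⊆ M, M'.Nonempty → IsClosed M' → MapsTo g M' M' → M' = M :=
    fun M' hM' hne' hcl' hinv' => hM'.antisymm
      (closure_inter_preimage_fst_subset hρ hg hPS (hM'.trans hMP) hcl' hne' hinv')
  refine ⟨hne, isClosed_closure, ?_, fun M' hM' hne' hcl' hinv' =>
    hleast M' hM' hne' hcl' (mapsTo_iff_image_subset.2 hinv')⟩
  exact hleast _ hinv.image_subset (hne.image g) (isClosed_closure.isCompact.image hgc).isClosed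
    ((mapsTo_image g M).mono_left hinv.image_subset)

lemma IsMinimalSet.mapsTo {X : Type*} [TopologicalSpace X] {f : X → X} {M : Set X}
    (hM : IsMinimalSet f M) : MapsTo f M M :=
  mapsTo_iff_image_subset.2 hM.2.2.1.le

lemma IsMinimalSet.eq_closure_inter_preimage_fst (hρ : DenseRange fun n : ℕ => n • ρ)
    (hg : Semiconj Prod.fst g (· + ρ)) (hPS : InjOn Prod.fst (P ∩ Prod.fst ⁻¹' S))
    (hmin : IsMinimalSet g (closure (P ∩ Prod.fst ⁻¹' S))) (hM : IsMinimalSet g M)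
    (hMP : M ⊆ P) : M = closure (P ∩ Prod.fst ⁻¹' S) :=
  (hM.2.2.2 _ (closure_inter_preimage_fst_subset hρ hg hPS hMP hM.2.1 hM.1 hM.mapsTo) hmin.1
    hmin.2.1 hmin.2.2.1.le).symm

end Rotation

section AlmostAutomorphic

lemma isAAMinimal_of_injOn_fst {Θ : Type} {Y : Type*} [NormedAddCommGroup Θ] [CompactSpace Θ]
    [MetricSpace Y] [CompactSpace Y] {ρ : Θ} {g : Θ × Y → Θ × Y} {M : Set (Θ × Y)} {S : Set Θ}
    (hρ : DenseRange fun n : ℕ => n • ρ) (hg : Semiconj Prod.fst g (· + ρ))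
    (hM : IsMinimalSet g M) (hS : Dense S) (hMS : InjOn Prod.fst (M ∩ Prod.fst ⁻¹' S)) :
    IsAAMinimal g M := by
  have hsurj : ∀ θ, ∃ p : M, p.1.1 = θ := fun θ => by
    obtain ⟨p, hp, hpθ⟩ : θ ∈ Prod.fst '' M := by
      rw [image_fst_eq_univ_of_mapsTo hρ hg hM.2.1 hM.1 hM.mapsTo]
      exact mem_univ θ
    exact ⟨⟨p, hp⟩, hpθ⟩
  refine ⟨hM, fun hmaps => ⟨{
    Y := Θ
    g := Homeomorph.addRight ρ
    hmap := fun p => p.1.1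
    factor := ⟨continuous_subtype_val.fst, hsurj, funext fun p => hg p.1⟩
    a11 := hS.mono fun θ hθ => ?_
    ap := fun ε hε => ⟨ε, hε, fun θ θ' hθ n => ?_⟩ }⟩⟩
  · obtain ⟨p, rfl⟩ := hsurj θ
    exact ⟨p, rfl, fun q (hq : q.1.1 = p.1.1) =>
      Subtype.ext (hMS ⟨q.2, by rwa [mem_preimage, hq]⟩ ⟨p.2, hθ⟩ hq)⟩
  · have hiter : ∀ x : Θ, zIter (Homeomorph.addRight ρ).toEquiv n x = x + n • ρ := fun x =>
      congrArg (fun e : Equiv.Perm Θ => e x) (Equiv.zsmul_addRight ρ n)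
    rwa [hiter, hiter, dist_add_right]

end AlmostAutomorphic

section AlmostPeriodic

variable {Θ Y : Type*} [MetricSpace Y]

lemma eventually_forall_dist_lt [MetricSpace Θ] {M : Set (Θ × Y)} (hM : IsCompact M) {θ₀ : Θ}
    (hθ₀ : {y | (θ₀, y) ∈ M}.Subsingleton) {δ : ℝ} (hδ : 0 < δ) :
    ∀ᶠ θ in 𝓝 θ₀, ∀ p ∈ M, ∀ q ∈ M, p.1 = θ → q.1 = θ → dist p q < δ := by
  set B : Set ((Θ × Y) × (Θ × Y)) := M ×ˢ M ∩ {z | z.1.1 = z.2.1 ∧ δ ≤ dist z.1 z.2}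
  have hB : IsCompact B := (hM.prod hM).inter_right
    ((isClosed_eq continuous_fst.fst continuous_snd.fst).inter
      (isClosed_le continuous_const continuous_dist))
  have hθB : θ₀ ∉ (fun z => z.1.1) '' B := by
    rintro ⟨⟨⟨θ, y⟩, ⟨θ', y'⟩⟩, ⟨⟨hy, hy'⟩, hθ, hdist⟩, rfl⟩
    obtain rfl : θ = θ' := hθ
    obtain rfl : y = y' := hθ₀ hy hy'
    rw [dist_self] at hdist
    exact hδ.not_ge hdist
  filter_upwards [(hB.image continuous_fst.fst).isClosed.isOpen_compl.mem_nhds hθB]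
    with θ hθ p hp q hq hpθ hqθ
  by_contra! hdist
  exact hθ ⟨(p, q), ⟨⟨hp, hq⟩, hpθ.trans hqθ.symm, hdist⟩, hpθ⟩

/-- Two points of a common fibre have `n`-th preimages in a common fibre as close as desired
to a singleton fibre; equicontinuity then makes the two points equal. -/
lemma IsAPMinimal.injOn_fst [CompactSpace Y] [NormedAddCommGroup Θ] [CompactSpace Θ] {ρ : Θ}
    {g : Θ × Y → Θ × Y} {M : Set (Θ × Y)} (hρ : DenseRange fun n : ℕ => n • ρ)
    (hg : Semiconj Prod.fst g (· + ρ)) (hM : IsAPMinimal g M) {θ₀ : Θ}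
    (hθ₀ : {y | (θ₀, y) ∈ M}.Subsingleton) : InjOn Prod.fst M := by
  intro q hq q' hq' hqq'
  by_contra hne
  obtain ⟨hmin, hap⟩ := hM
  obtain ⟨δ, hδ, hequi⟩ := hap hmin.mapsTo (dist q q') (dist_pos.2 hne)
  have hfst : ∀ (n : ℕ) p, (g^[n] p).1 = p.1 + n • ρ := fun n p => by
    simpa only [add_right_iterate] using hg.iterate_right n p
  have hnear : ∀ᶠ x in 𝓝 (q.1 - θ₀), ∀ p ∈ M, ∀ p' ∈ M,
      p.1 = q.1 - x → p'.1 = q.1 - x → dist p p' < δ := by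
    have hlim : Tendsto (fun x => q.1 - x) (𝓝 (q.1 - θ₀)) (𝓝 θ₀) := by
      simpa only [sub_sub_cancel] using
        (continuous_const.sub continuous_id).tendsto (f := fun x => q.1 - x) (q.1 - θ₀)
    exact hlim.eventually (eventually_forall_dist_lt hmin.2.1.isCompact hθ₀ hδ)
  obtain ⟨n, hn⟩ := hρ.exists_mem_open isOpen_interior ⟨_, mem_interior_iff_mem_nhds.2 hnear⟩
  have hsurj : SurjOn g^[n] M M := SurjOn.iterate hmin.2.2.1.ge n
  obtain ⟨p, hp, hpq⟩ := hsurj hq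
  obtain ⟨p', hp', hpq'⟩ := hsurj hq'
  have hdist : dist p p' < δ := interior_subset hn p hp p' hp'
    (by rw [← hpq, hfst, add_sub_cancel_right])
    (by rw [hqq', ← hpq', hfst, add_sub_cancel_right])
  have hlt : dist (g^[n] p) (g^[n] p') < dist q q' := by
    have h := hequi ⟨p, hp⟩ ⟨p', hp'⟩ hdist n
    rwa [restrictMap, MapsTo.iterate_restrict] at h
  rw [hpq, hpq'] at hlt
  exact lt_irrefl _ hlt

lemma exists_continuous_curveGraph_subset {Θ : Type*} [TopologicalSpace Θ] [T2Space Θ]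
    {I : Set ℝ} {M : Set (Θ × I)} (hM : IsCompact M) (hinj : InjOn Prod.fst M)
    (hsurj : Prod.fst '' M = univ) : ∃ η : Θ → I, Continuous η ∧ curveGraph η ⊆ M := by
  have : CompactSpace M := isCompact_iff_compactSpace.1 hM
  have hbij : Bijective fun p : M => p.1.1 := by
    refine ⟨fun p q hpq => Subtype.ext (hinj p.2 q.2 hpq), fun θ => ?_⟩
    obtain ⟨p, hp, hpθ⟩ : θ ∈ Prod.fst '' M := hsurj ▸ mem_univ θ
    exact ⟨⟨p, hp⟩, hpθ⟩
  let e : M ≃ₜ Θ := Continuous.homeoOfEquivCompactToT2 (f := Equiv.ofBijective _ hbij)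
    continuous_subtype_val.fst
  refine ⟨fun θ => (e.symm θ).1.2, (continuous_subtype_val.comp e.symm.continuous).snd, ?_⟩
  rintro ⟨θ, x⟩ hx
  obtain rfl : x = (e.symm θ).1.2 := hx
  have hθ : (e.symm θ).1.1 = θ := e.apply_symm_apply θ
  have hmem := (e.symm θ).2
  rwa [← Prod.mk.eta (p := (e.symm θ).1), hθ] at hmem

end AlmostPeriodic

/-! ### Heights above an invariant curve -/

section Heights

variable {Θ : Type*} [TopologicalSpace Θ]

lemma continuous_uncurry_of_strictMono_of_rightInverse {G H : Θ → ℝ → ℝ} (hG : Continuous ↿G)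
    (hmono : ∀ θ, StrictMono (G θ)) (hH : ∀ θ, RightInverse (H θ) (G θ)) : Continuous ↿H := by
  rw [continuous_iff_continuousAt]
  rintro ⟨θ, z⟩
  have hGc : ∀ c, ContinuousAt (fun p : Θ × ℝ => G p.1 c) (θ, z) := fun c =>
    (hG.comp (continuous_fst.prodMk continuous_const)).continuousAt
  refine tendsto_order.2 ⟨fun c hc => ?_, fun c hc => ?_⟩
  · have hlt : G θ c < z := hH θ z ▸ hmono θ hc
    filter_upwards [(hGc c).eventually_lt continuous_snd.continuousAt hlt] with p hp
    exact (hmono p.1).lt_iff_lt.1 (hp.trans_eq (hH p.1 p.2).symm)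
  · have hlt : z < G θ c := hH θ z ▸ hmono θ hc
    filter_upwards [continuous_snd.continuousAt.eventually_lt (hGc c) hlt] with p hp
    exact (hmono p.1).lt_iff_lt.1 ((hH p.1 p.2).trans_lt hp)

lemma exists_homeomorph_eq_prodMk (α : Θ ≃ₜ Θ) {G : Θ → ℝ → ℝ} (hG : Continuous ↿G)
    (hmono : ∀ θ, StrictMono (G θ)) (hsurj : ∀ θ, Surjective (G θ)) :
    ∃ F : Θ × ℝ ≃ₜ Θ × ℝ, ∀ p, F p = (α p.1, G p.1 p.2) := by
  choose H hH using hsurj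
  have hHc : Continuous ↿H := continuous_uncurry_of_strictMono_of_rightInverse hG hmono hH
  have hHG : ∀ θ y, H θ (G θ y) = y := fun θ y => (hmono θ).injective (hH θ _)
  exact ⟨{
    toFun p := (α p.1, G p.1 p.2)
    invFun p := (α.symm p.1, H (α.symm p.1) p.2)
    left_inv p := by simp only [Homeomorph.symm_apply_apply, hHG]
    right_inv p := by simp only [Homeomorph.apply_symm_apply, hH (α.symm p.1) p.2]
    continuous_toFun := (α.continuous.comp continuous_fst).prodMk hG
    continuous_invFun :=
      have hα : Continuous fun p : Θ × ℝ => α.symm p.1 := α.symm.continuous.comp continuous_fst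
      hα.prodMk (hHc.comp (hα.prodMk continuous_snd)) }, fun _ => rfl⟩

variable {a b : ℝ}

/-- The extension to `ℝ` of a self-map `φ` of `[a, b]` by the translations `y ↦ y + (φ a - a)`
and `y ↦ y + (φ b - b)`; unlike a constant extension it keeps strict monotonicity. -/
def translationExtend (hab : a ≤ b) (φ : Icc a b → Icc a b) (y : ℝ) : ℝ :=
  φ (projIcc a b hab y) + (y - projIcc a b hab y)

lemma strictMono_translationExtend (hab : a ≤ b) {φ : Icc a b → Icc a b} (hφ : StrictMono φ) :
    StrictMono (translationExtend hab φ) := by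
  intro y y' hy
  have hproj : y - projIcc a b hab y ≤ y' - projIcc a b hab y' := by
    rw [coe_projIcc, coe_projIcc]
    grind
  rcases (monotone_projIcc hab hy.le).lt_or_eq with hlt | heq
  · have hφlt : (φ (projIcc a b hab y) : ℝ) < φ (projIcc a b hab y') := hφ hlt
    exact add_lt_add_of_lt_of_le hφlt hproj
  · rw [translationExtend, translationExtend, heq]
    gcongr

lemma abs_translationExtend_sub_self_le (hab : a ≤ b) (φ : Icc a b → Icc a b) (y : ℝ) :
    |translationExtend hab φ y - y| ≤ b - a := by
  have heq : translationExtend hab φ y - y = φ (projIcc a b hab y) - projIcc a b hab y := by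
    rw [translationExtend]
    ring
  rw [heq]
  exact abs_sub_le_of_le_of_le (φ _).2.1 (φ _).2.2 (projIcc a b hab y).2.1 (projIcc a b hab y).2.2

lemma translationExtend_coe (hab : a ≤ b) (φ : Icc a b → Icc a b) (x : Icc a b) :
    translationExtend hab φ x = φ x := by
  rw [translationExtend, projIcc_val, sub_self, add_zero]

lemma surjective_of_abs_sub_self_le {g : ℝ → ℝ} (hg : Continuous g) {C : ℝ}
    (hC : ∀ y, |g y - y| ≤ C) : Surjective g := by
  refine hg.surjective ?_ ?_
  · exact tendsto_atTop_mono (fun y => by linarith only [(abs_le.1 (hC y)).1, id_eq y])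
      (tendsto_atTop_add_const_right _ (-C) tendsto_id)
  · exact tendsto_atBot_mono (fun y => by linarith only [(abs_le.1 (hC y)).2, id_eq y])
      (tendsto_atBot_add_const_right _ C tendsto_id)

/-- The fibrewise strict order on the cylinder `Θ × ℝ`. -/
def FibreLT (p q : Θ × ℝ) : Prop := p.1 = q.1 ∧ p.2 < q.2

variable (Θ) in
/-- The group of homeomorphisms of the cylinder that permute the fibres, are increasing on each
of them, and preserve the zero section. -/
def fibreOrderAut : Subgroup (Θ × ℝ ≃ₜ Θ × ℝ) where
  carrier := {F | (∀ p q, FibreLT (F p) (F q) ↔ FibreLT p q) ∧ ∀ p, (F p).2 = 0 ↔ p.2 = 0}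
  mul_mem' hF hG := ⟨fun _ _ => (hF.1 _ _).trans (hG.1 _ _), fun _ => (hF.2 _).trans (hG.2 _)⟩
  one_mem' := ⟨fun _ _ => Iff.rfl, fun _ => Iff.rfl⟩
  inv_mem' {F} hF := by
    have hFF : ∀ p, F (F⁻¹ p) = p := F.apply_symm_apply
    exact ⟨fun p q => by rw [← hF.1, hFF, hFF], fun p => by rw [← hF.2, hFF]⟩

/-- The point `p` in the coordinates of the cylinder in which the curve `γ` is the zero
section. -/
def straighten (γ : Θ → Icc a b) (p : Θ × Icc a b) : Θ × ℝ := (p.1, p.2 - γ p.1)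

lemma exists_mem_fibreOrderAut_straighten (hab : a ≤ b) {α : Θ ≃ₜ Θ}
    {f : Θ × Icc a b → Θ × Icc a b} (hf : ForcedIncreasing α f) {γ : Θ → Icc a b}
    (hγ : Continuous γ) (hγinv : ∀ θ, f (θ, γ θ) = (α θ, γ (α θ))) :
    ∃ F ∈ fibreOrderAut Θ, ∀ p, F (straighten γ p) = straighten γ (f p) := by
  obtain ⟨hfc, hfα, hfmono⟩ := hf
  set T : Θ → ℝ → ℝ := fun θ => translationExtend hab fun x => (f (θ, x)).2
  have hTc : Continuous ↿T := by
    have hproj : Continuous fun p : Θ × ℝ => projIcc a b hab p.2 :=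
      continuous_projIcc.comp continuous_snd
    exact (continuous_subtype_val.comp (hfc.comp (continuous_fst.prodMk hproj)).snd).add
      (continuous_snd.sub (continuous_subtype_val.comp hproj))
  have hTmono : ∀ θ, StrictMono (T θ) := fun θ => strictMono_translationExtend hab (hfmono θ)
  have hTsurj : ∀ θ, Surjective (T θ) := fun θ =>
    surjective_of_abs_sub_self_le (hTc.comp (continuous_const.prodMk continuous_id) :)
      (abs_translationExtend_sub_self_le hab fun x => (f (θ, x)).2)
  have hTγ : ∀ θ, T θ (γ θ) = γ (α θ) := fun θ => by
    simp only [T, translationExtend_coe, hγinv]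
  have hγc : Continuous fun θ => (γ θ : ℝ) := continuous_subtype_val.comp hγ
  obtain ⟨F, hF⟩ := exists_homeomorph_eq_prodMk α (G := fun θ w => T θ (w + γ θ) - γ (α θ))
    ((hTc.comp (continuous_fst.prodMk
      (continuous_snd.add (hγc.comp continuous_fst)))).sub
        (hγc.comp (α.continuous.comp continuous_fst)))
    (fun θ _ _ hw => sub_lt_sub_right (hTmono θ (add_lt_add_left hw _)) _)
    (fun θ => (Equiv.subRight _).surjective.comp
      ((hTsurj θ).comp (Equiv.addRight _).surjective))
  refine ⟨F, ⟨fun p q => ?_, fun p => ?_⟩, fun p => ?_⟩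
  · simp only [FibreLT, hF, α.injective.eq_iff]
    refine and_congr_right fun hpq => ?_
    rw [hpq, sub_lt_sub_iff_right, (hTmono _).lt_iff_lt, add_lt_add_iff_right]
  · rw [hF, sub_eq_zero, ← hTγ, (hTmono _).injective.eq_iff, add_eq_right]
  · simp only [hF, straighten, sub_add_cancel, T, translationExtend_coe, hfα]

/-- Fibre coordinates `w n` on `Θ × [a, b]`, `n ∈ ℤ`, that vanish exactly on the curve `γ` and
satisfy `w n ∘ f ^ n = w 0`: the height above `γ` of the `n`-th preimage. They are needed for all
`n` although `f` need not be onto. -/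
structure IsHeightFamily (f : Θ × Icc a b → Θ × Icc a b) (γ : Θ → Icc a b)
    (w : ℤ → Θ × Icc a b → ℝ) : Prop where
  continuous : ∀ n, Continuous (w n)
  strictMono : ∀ n θ, StrictMono fun x => w n (θ, x)
  apply_curve : ∀ n θ, w n (θ, γ θ) = 0
  succ_apply : ∀ n p, w (n + 1) (f p) = w n p

lemma exists_isHeightFamily (hab : a ≤ b) {α : Θ ≃ₜ Θ} {f : Θ × Icc a b → Θ × Icc a b}
    (hf : ForcedIncreasing α f) {γ : Θ → Icc a b} (hγ : Continuous γ)
    (hγinv : ∀ θ, f (θ, γ θ) = (α θ, γ (α θ))) : ∃ w, IsHeightFamily f γ w := by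
  obtain ⟨F, hF, hFf⟩ := exists_mem_fibreOrderAut_straighten hab hf hγ hγinv
  have hFn : ∀ n : ℤ, F ^ n ∈ fibreOrderAut Θ := zpow_mem hF
  have hγc : Continuous fun p : Θ × Icc a b => (γ p.1 : ℝ) :=
    continuous_subtype_val.comp (hγ.comp continuous_fst)
  have hs : Continuous (straighten γ : Θ × Icc a b → Θ × ℝ) :=
    continuous_fst.prodMk ((continuous_subtype_val.comp continuous_snd).sub hγc)
  refine ⟨fun n p => ((F ^ (-n)) (straighten γ p)).2, ⟨fun n => ?_, fun n θ x y hxy => ?_,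
    fun n θ => ((hFn _).2 _).2 (sub_self _), fun n p => ?_⟩⟩
  · exact ((F ^ (-n)).continuous.comp hs).snd
  · have hlt : FibreLT (straighten γ (θ, x)) (straighten γ (θ, y)) :=
      ⟨rfl, sub_lt_sub_right (Subtype.coe_lt_coe.2 hxy) _⟩
    exact (((hFn (-n)).1 _ _).2 hlt).2
  · have hzpow : F ^ (-n) = F ^ (-(n + 1)) * F := by
      rw [← zpow_add_one, neg_add, neg_add_cancel_right]
    rw [← hFf, hzpow, Homeomorph.mul_apply]

end Heights

/-! ### A function with an indeterminate value -/

/-- The possible values of the quotient `(w + u) / (|w| + v)` lying in `[-1, 1]`; when `0 / 0`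
these are all of `[-1, 1]`. -/
def jumpSet (u v w : ℝ) : Set ℝ := {t | |t| ≤ 1 ∧ t * (|w| + v) = w + u}

section JumpSet

variable {u v w w' t t' : ℝ}

lemma jumpSet_zero_zero_zero : jumpSet 0 0 0 = Icc (-1) 1 := by
  ext t
  simp only [jumpSet, abs_zero, add_zero, mul_zero, and_true, mem_ofPred_eq, abs_le, mem_Icc]

lemma jumpSet_nonempty (huv : |u| ≤ v) : (jumpSet u v w).Nonempty := by
  have hle : |w + u| ≤ |w| + v := (abs_add_le w u).trans (add_le_add_right huv _)
  have hnonneg : 0 ≤ |w| + v := (abs_nonneg _).trans hle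
  refine ⟨(w + u) / (|w| + v), ?_, div_mul_cancel_of_imp fun h => ?_⟩
  · rw [abs_div, abs_of_nonneg hnonneg]
    exact div_le_one_of_le₀ hle hnonneg
  · exact abs_nonpos_iff.1 (hle.trans_eq h)

lemma subsingleton_jumpSet (h : |w| + v ≠ 0) : (jumpSet u v w).Subsingleton :=
  fun _ ht _ ht' => mul_right_cancel₀ h (ht.2.trans ht'.2.symm)

lemma convex_jumpSet : Convex ℝ (jumpSet u v w) := by
  have heq : jumpSet u v w = Icc (-1) 1 ∩ (fun t => t * (|w| + v)) ⁻¹' {w + u} := by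
    ext t
    simp only [jumpSet, abs_le, mem_ofPred_eq, mem_inter_iff, mem_Icc, mem_preimage,
      mem_singleton_iff]
  rw [heq]
  exact (convex_Icc _ _).inter ((convex_singleton _).is_linear_preimage
    (LinearMap.mulRight ℝ (|w| + v)).isLinear)

lemma isClosed_setOf_mem_jumpSet {X : Type*} [TopologicalSpace X] {u v w t : X → ℝ}
    (hu : Continuous u) (hv : Continuous v) (hw : Continuous w) (ht : Continuous t) :
    IsClosed {x | t x ∈ jumpSet (u x) (v x) (w x)} :=
  (isClosed_le ht.abs continuous_const).inter
    (isClosed_eq (ht.mul (hw.abs.add hv)) (hw.add hu))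

lemma le_of_mem_jumpSet_of_lt (huv : |u| ≤ v) (hw : w < w') (ht : t ∈ jumpSet u v w)
    (ht' : t' ∈ jumpSet u v w') : t ≤ t' := by
  obtain ⟨ht, h⟩ := ht
  obtain ⟨ht', h'⟩ := ht'
  rw [abs_le] at huv ht ht'
  have hv : 0 ≤ v := by linarith
  by_contra! hlt
  rcases abs_cases w with ⟨habs, hsign⟩ | ⟨habs, hsign⟩ <;>
    rcases abs_cases w' with ⟨habs', hsign'⟩ | ⟨habs', hsign'⟩ <;>
    rw [habs] at h <;> rw [habs'] at h' <;> nlinarith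

lemma eq_one_of_mem_jumpSet (hu : 0 < u) (huv : |u| = v) (ht : t ∈ jumpSet u v 0) : t = 1 := by
  have heq := ht.2
  rw [← huv, abs_of_pos hu, abs_zero, zero_add] at heq
  exact (mul_eq_right₀ hu.ne').1 heq

lemma eq_neg_one_of_mem_jumpSet (hu : u < 0) (huv : |u| = v) (ht : t ∈ jumpSet u v 0) :
    t = -1 := by
  have heq := ht.2
  rw [← huv, abs_of_neg hu, abs_zero, zero_add] at heq
  exact mul_right_cancel₀ hu.ne (by linarith only [heq])

end JumpSet

/-- The quotient `u / v` is a function with values in `[-1, 1]`, continuous outside `0`, that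
takes both values `1` and `-1`, and only these, in every small punctured neighbourhood of `0`. -/
structure IsJump {Θ : Type*} [TopologicalSpace Θ] [Zero Θ] (u v : Θ → ℝ) : Prop where
  continuous_num : Continuous u
  continuous_den : Continuous v
  abs_num_le : ∀ θ, |u θ| ≤ v θ
  den_eq_zero : ∀ {θ}, v θ = 0 ↔ θ = 0
  eventually_abs_num_eq : ∀ᶠ θ in 𝓝 0, |u θ| = v θ
  zero_mem_closure_pos : 0 ∈ closure {θ | 0 < u θ}
  zero_mem_closure_neg : 0 ∈ closure {θ | u θ < 0}

lemma IsJump.num_zero {Θ : Type*} [TopologicalSpace Θ] [Zero Θ] {u v : Θ → ℝ}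
    (h : IsJump u v) : u 0 = 0 :=
  abs_nonpos_iff.1 ((h.abs_num_le 0).trans_eq (h.den_eq_zero.2 rfl))

/-! ### The blown-up cylinder -/

lemma isPreconnected_of_isConnected_fibres {Y Z : Type*} [TopologicalSpace Y] [T2Space Y]
    [PreconnectedSpace Y] [TopologicalSpace Z] {K : Set (Y × Z)} (hK : IsCompact K)
    (hfib : ∀ y, IsConnected {z | (y, z) ∈ K}) : IsPreconnected K := by
  have : CompactSpace K := isCompact_iff_compactSpace.1 hK
  have hcont : Continuous fun p : K => p.1.1 := continuous_subtype_val.fst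
  have hsurj : Surjective fun p : K => p.1.1 := fun y =>
    let ⟨z, hz⟩ := (hfib y).nonempty
    ⟨⟨(y, z), hz⟩, rfl⟩
  have hpre : ∀ y, IsConnected ((fun p : K => p.1.1) ⁻¹' {y}) := fun y => by
    have : ConnectedSpace {z | (y, z) ∈ K} := isConnected_iff_connectedSpace.1 (hfib y)
    have heq : (fun p : K => p.1.1) ⁻¹' {y} =
        range fun z : {z | (y, z) ∈ K} => (⟨(y, z), z.2⟩ : K) := by
      ext ⟨⟨y', z⟩, hp⟩
      constructor
      · rintro rfl
        exact ⟨⟨z, hp⟩, rfl⟩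
      · rintro ⟨_, heq⟩
        exact (congrArg (fun p : K => p.1.1) heq).symm
    rw [heq]
    exact isConnected_range (by fun_prop)
  rw [isPreconnected_iff_preconnectedSpace, preconnectedSpace_iff_connectedComponent]
  intro p
  rw [← (hcont.isClosedMap.isQuotientMap hcont hsurj).preimage_connectedComponent hpre,
    PreconnectedSpace.connectedComponent_eq_univ, preimage_univ]

/-- An invariant curve `γ` of a map `f` forced by the rotation by `ρ`, of infinite order, with
the choices that determine its blow-up: a jump `num / den` at `0 : Θ`, a family of heights above
the curve, and the weights of the points of the orbit of `0`. -/
structure BlowUpData {Θ : Type*} [AddCommGroup Θ] [TopologicalSpace Θ] {a b : ℝ} (ρ : Θ)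
    (f : Θ × Icc a b → Θ × Icc a b) (γ : Θ → Icc a b) where
  zsmul_injective : Injective fun n : ℤ => n • ρ
  forcedIncreasing : ForcedIncreasing (· + ρ) f
  continuous_curve : Continuous γ
  curve_mem_Ioo : ∀ θ, (γ θ : ℝ) ∈ Ioo a b
  map_curve : ∀ θ, f (θ, γ θ) = (θ + ρ, γ (θ + ρ))
  num : Θ → ℝ
  den : Θ → ℝ
  isJump : IsJump num den
  height : ℤ → Θ × Icc a b → ℝ
  isHeightFamily : IsHeightFamily f γ height
  weight : ℤ → ℝ
  weight_pos : ∀ n, 0 < weight n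
  summable_weight : Summable weight
  tsum_weight_lt : (b - a) * ∑' n, weight n < 1

lemma exists_pos_summable_mul_tsum_lt_one (ι : Type*) [Countable ι] (C : ℝ) :
    ∃ c : ι → ℝ, (∀ i, 0 < c i) ∧ Summable c ∧ C * ∑' i, c i < 1 := by
  have := Encodable.ofCountable ι
  have hpos : 0 < (|C| + 1)⁻¹ := inv_pos.2 (by positivity)
  obtain ⟨c, hc, s, hs, hle⟩ := posSumOfEncodable hpos ι
  refine ⟨c, hc, hs.summable, ?_⟩
  rw [hs.tsum_eq]
  have hs0 : 0 ≤ s := hs.nonneg fun i => (hc i).le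
  calc C * s ≤ |C| * (|C| + 1)⁻¹ := mul_le_mul (le_abs_self C) hle hs0 (abs_nonneg C)
    _ < 1 := by rw [← div_eq_mul_inv, div_lt_one (by positivity)]; exact lt_add_one _

namespace BlowUpData

variable {Θ : Type*} [AddCommGroup Θ] [TopologicalSpace Θ] {a b : ℝ} {ρ : Θ}
  {f : Θ × Icc a b → Θ × Icc a b} {γ : Θ → Icc a b} (D : BlowUpData ρ f γ)

/-- The fibre over `θ` of the blown-up cylinder: a point `y` of `[a, b]` together with a value
at `(θ, y)` of each of the quotients `(w n + u (θ - n • ρ)) / (|w n| + v (θ - n • ρ))`, where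
`u`, `v`, `w` are the numerator and denominator of the jump and the heights. The `n`-th of them
is indeterminate exactly at the point of the curve over `n • ρ`. -/
def fibre (θ : Θ) : Set (Icc a b × (ℤ → ℝ)) :=
  {z | ∀ n, z.2 n ∈ jumpSet (D.num (θ - n • ρ)) (D.den (θ - n • ρ)) (D.height n (θ, z.1))}

/-- The blown-up cylinder. -/
def totalSpace : Set (Θ × (Icc a b × (ℤ → ℝ))) := {k | k.2 ∈ D.fibre k.1}

variable {D} {θ : Θ} {z z' : Icc a b × (ℤ → ℝ)}

lemma height_eq_zero {n : ℤ} {y : Icc a b} : D.height n (θ, y) = 0 ↔ y = γ θ := by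
  rw [← D.isHeightFamily.apply_curve n θ]
  exact (D.isHeightFamily.strictMono n θ).injective.eq_iff

lemma num_zero : D.num 0 = 0 := D.isJump.num_zero

lemma snd_apply_eq_of_mem_fibre (hz : z ∈ D.fibre θ) (hz' : z' ∈ D.fibre θ) (hy : z.1 = z'.1)
    {n : ℤ} (hn : ¬(θ = n • ρ ∧ z.1 = γ θ)) : z.2 n = z'.2 n := by
  have hden : 0 ≤ D.den (θ - n • ρ) := (abs_nonneg _).trans (D.isJump.abs_num_le _)
  have hne : |D.height n (θ, z.1)| + D.den (θ - n • ρ) ≠ 0 := fun h => hn <| by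
    rw [add_eq_zero_iff_of_nonneg (abs_nonneg _) hden, abs_eq_zero, height_eq_zero,
      D.isJump.den_eq_zero, sub_eq_zero] at h
    exact h.symm
  exact subsingleton_jumpSet hne (hz n) (hy ▸ hz' n)

lemma isChain_fibre : IsChain (· ≤ ·) (D.fibre θ) := by
  have hlt : ∀ {z z'}, z ∈ D.fibre θ → z' ∈ D.fibre θ → z.1 < z'.1 → z ≤ z' :=
    fun hz hz' hy => ⟨hy.le, fun n => le_of_mem_jumpSet_of_lt (D.isJump.abs_num_le _)
      (D.isHeightFamily.strictMono n θ hy) (hz n) (hz' n)⟩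
  intro z hz z' hz' hne
  rcases lt_trichotomy z.1 z'.1 with hy | hy | hy
  · exact Or.inl (hlt hz hz' hy)
  · obtain ⟨n, hn⟩ : ∃ n, z.2 n ≠ z'.2 n := by
      by_contra! h
      exact hne (Prod.ext hy (funext h))
    have hθ : θ = n • ρ := by_contra fun h =>
      hn (snd_apply_eq_of_mem_fibre hz hz' hy fun h' => h h'.1)
    have hm : ∀ m, m ≠ n → z.2 m = z'.2 m := fun m hm =>
      snd_apply_eq_of_mem_fibre hz hz' hy fun h => hm (D.zsmul_injective (h.1.symm.trans hθ))
    rcases le_total (z.2 n) (z'.2 n) with hle | hle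
    · refine Or.inl ⟨hy.le, fun m => ?_⟩
      rcases eq_or_ne m n with rfl | hmn
      exacts [hle, (hm m hmn).le]
    · refine Or.inr ⟨hy.ge, fun m => ?_⟩
      rcases eq_or_ne m n with rfl | hmn
      exacts [hle, (hm m hmn).ge]
  · exact Or.inr (hlt hz' hz hy)

lemma isConnected_setOf_mem_fibre (y : Icc a b) : IsConnected {t | (y, t) ∈ D.fibre θ} := by
  set J : ℤ → Set ℝ := fun n =>
    jumpSet (D.num (θ - n • ρ)) (D.den (θ - n • ρ)) (D.height n (θ, y))
  have heq : {t | (y, t) ∈ D.fibre θ} = univ.pi J := by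
    ext t
    exact mem_univ_pi.symm
  have hne : ∀ n, (J n).Nonempty := fun n => jumpSet_nonempty (D.isJump.abs_num_le _)
  rw [heq]
  exact (convex_pi fun _ _ => convex_jumpSet).isConnected (univ_pi_nonempty_iff.2 hne)

lemma fibre_subset : D.fibre θ ⊆ univ ×ˢ univ.pi fun _ => Icc (-1) 1 :=
  fun _ hz => ⟨mem_univ _, fun n _ => abs_le.1 (hz n).1⟩

section Compact

variable [IsTopologicalAddGroup Θ]

lemma isClosed_totalSpace : IsClosed D.totalSpace := by
  have hset : D.totalSpace = ⋂ n : ℤ, {k | k.2.2 n ∈ jumpSet (D.num (k.1 - n • ρ))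
      (D.den (k.1 - n • ρ)) (D.height n (k.1, k.2.1))} := by
    ext k
    simp only [totalSpace, fibre, mem_ofPred_eq, mem_iInter]
  rw [hset]
  refine isClosed_iInter fun n => ?_
  have hsub : Continuous fun k : Θ × (Icc a b × (ℤ → ℝ)) => k.1 - n • ρ :=
    continuous_fst.sub continuous_const
  exact isClosed_setOf_mem_jumpSet (D.isJump.continuous_num.comp hsub)
    (D.isJump.continuous_den.comp hsub)
    ((D.isHeightFamily.continuous n).comp (continuous_fst.prodMk continuous_snd.fst))
    ((continuous_apply n).comp continuous_snd.snd)

lemma isCompact_fibre : IsCompact (D.fibre θ) :=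
  (isCompact_univ.prod (isCompact_univ_pi fun _ => isCompact_Icc)).of_isClosed_subset
    (isClosed_totalSpace.preimage (Continuous.prodMk_right θ)) fibre_subset

lemma isCompact_totalSpace [CompactSpace Θ] : IsCompact D.totalSpace :=
  (isCompact_univ.prod (isCompact_univ.prod
    (isCompact_univ_pi fun _ => isCompact_Icc))).of_isClosed_subset isClosed_totalSpace
      fun _ hk => ⟨mem_univ _, fibre_subset hk⟩

lemma isPreconnected_fibre : IsPreconnected (D.fibre θ) :=
  have := Subtype.preconnectedSpace (isPreconnected_Icc (a := a) (b := b))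
  isPreconnected_of_isConnected_fibres isCompact_fibre isConnected_setOf_mem_fibre

end Compact

end BlowUpData

/-! ### The blown-up cylinder is a cylinder -/

namespace BlowUpData

variable {Θ : Type*} [AddCommGroup Θ] [TopologicalSpace Θ] {a b : ℝ} {ρ : Θ}
  {f : Θ × Icc a b → Θ × Icc a b} {γ : Θ → Icc a b} (D : BlowUpData ρ f γ)

/-- The sum of the indeterminate coordinates of `z`, with the weights of the blow-up. -/
def weightedSum (z : Icc a b × (ℤ → ℝ)) : ℝ := ∑' n, D.weight n * z.2 n

/-- The position in `[a, b]` of the point `z` of a fibre of the blown-up cylinder. The factor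
`(y - a) * (b - y)` keeps the two boundary curves in place. -/
def position (z : Icc a b × (ℤ → ℝ)) : ℝ :=
  z.1 + (z.1 - a) * (b - z.1) * D.weightedSum z

variable {D} {θ : Θ} {z z' : Icc a b × (ℤ → ℝ)}

lemma abs_weight_mul_le (hz : z ∈ D.fibre θ) (n : ℤ) : |D.weight n * z.2 n| ≤ D.weight n := by
  rw [abs_mul, abs_of_pos (D.weight_pos n)]
  exact mul_le_of_le_one_right (D.weight_pos n).le (hz n).1

lemma summable_weight_mul (hz : z ∈ D.fibre θ) : Summable fun n => D.weight n * z.2 n :=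
  Summable.of_norm_bounded D.summable_weight (abs_weight_mul_le hz)

lemma abs_weightedSum_le (hz : z ∈ D.fibre θ) : |D.weightedSum z| ≤ ∑' n, D.weight n :=
  tsum_of_norm_bounded (f := fun n => D.weight n * z.2 n) D.summable_weight.hasSum
    (abs_weight_mul_le hz)

lemma abs_mul_weightedSum_lt_one (hz : z ∈ D.fibre θ) {x : ℝ} (hx : |x| ≤ b - a) :
    |x * D.weightedSum z| < 1 := by
  rw [abs_mul]
  exact (mul_le_mul hx (abs_weightedSum_le hz) (abs_nonneg _)
    ((abs_nonneg x).trans hx)).trans_lt D.tsum_weight_lt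

lemma weightedSum_mono (hz : z ∈ D.fibre θ) (hz' : z' ∈ D.fibre θ) (hle : z ≤ z') :
    D.weightedSum z ≤ D.weightedSum z' :=
  (summable_weight_mul hz).tsum_le_tsum
    (fun n => mul_le_mul_of_nonneg_left (hle.2 n) (D.weight_pos n).le) (summable_weight_mul hz')

lemma weightedSum_lt (hz : z ∈ D.fibre θ) (hz' : z' ∈ D.fibre θ) (hlt : z.2 < z'.2) :
    D.weightedSum z < D.weightedSum z' := by
  obtain ⟨hle, n, hn⟩ := Pi.lt_def.1 hlt
  exact Summable.tsum_lt_tsum (i := n)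
    (fun n => mul_le_mul_of_nonneg_left (hle n) (D.weight_pos n).le)
    (mul_lt_mul_of_pos_left hn (D.weight_pos n)) (summable_weight_mul hz)
    (summable_weight_mul hz')

lemma position_mem_Icc (hz : z ∈ D.fibre θ) : D.position z ∈ Icc a b := by
  obtain ⟨ha, hb⟩ := z.1.2
  have hlo : |(b - z.1) * D.weightedSum z| < 1 :=
    abs_mul_weightedSum_lt_one hz (abs_le.2 ⟨by linarith, by linarith⟩)
  have hhi : |((z.1 : ℝ) - a) * D.weightedSum z| < 1 :=
    abs_mul_weightedSum_lt_one hz (abs_le.2 ⟨by linarith, by linarith⟩)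
  rw [abs_lt] at hlo hhi
  constructor
  · have h : 0 ≤ (z.1 - a) * (1 + (b - z.1) * D.weightedSum z) :=
      mul_nonneg (by linarith) (by linarith)
    rw [position]
    linarith
  · have h : 0 ≤ (b - z.1) * (1 - (z.1 - a) * D.weightedSum z) :=
      mul_nonneg (by linarith) (by linarith)
    rw [position]
    linarith

lemma position_lt_position_of_fst_lt (hz : z ∈ D.fibre θ) (hz' : z' ∈ D.fibre θ) (hle : z ≤ z')
    (hy : z.1 < z'.1) : D.position z < D.position z' := by
  obtain ⟨ha, -⟩ := z.1.2
  obtain ⟨-, hb'⟩ := z'.1.2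
  have hy : (z.1 : ℝ) < z'.1 := hy
  have habs : |(a + b - z.1 - z'.1) * D.weightedSum z| < 1 :=
    abs_mul_weightedSum_lt_one hz (abs_le.2 ⟨by linarith, by linarith⟩)
  calc D.position z
      < z'.1 + (z'.1 - a) * (b - z'.1) * D.weightedSum z := by
        have hpos : 0 < (z'.1 - z.1) * (1 + (a + b - z.1 - z'.1) * D.weightedSum z) :=
          mul_pos (sub_pos.2 hy) (by linarith [(abs_lt.1 habs).1])
        rw [position]
        linarith
    _ ≤ D.position z' := by
        have hsum := weightedSum_mono hz hz' hle
        have hprod : 0 ≤ (z'.1 - a) * (b - z'.1) := mul_nonneg (by linarith) (by linarith)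
        exact add_le_add_right (mul_le_mul_of_nonneg_left hsum hprod) _

lemma position_lt_position_of_fst_eq (hz : z ∈ D.fibre θ) (hz' : z' ∈ D.fibre θ)
    (hlt : z.2 < z'.2) (hy : z.1 = z'.1) : D.position z < D.position z' := by
  obtain ⟨n, hn⟩ : ∃ n, z.2 n ≠ z'.2 n := Function.ne_iff.1 hlt.ne
  have hyγ : z.1 = γ θ := by_contra fun h =>
    hn (snd_apply_eq_of_mem_fibre hz hz' hy fun h' => h h'.2)
  obtain ⟨haγ, hbγ⟩ := D.curve_mem_Ioo θ
  have hprod : 0 < ((γ θ : ℝ) - a) * (b - γ θ) := mul_pos (sub_pos.2 haγ) (sub_pos.2 hbγ)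
  rw [position, position, ← hy, hyγ]
  exact add_lt_add_right (mul_lt_mul_of_pos_left (weightedSum_lt hz hz' hlt) hprod) _

lemma position_lt_position (hz : z ∈ D.fibre θ) (hz' : z' ∈ D.fibre θ) (hlt : z < z') :
    D.position z < D.position z' := by
  rcases hlt.le.1.lt_or_eq with hy | hy
  · exact position_lt_position_of_fst_lt hz hz' hlt.le hy
  · exact position_lt_position_of_fst_eq hz hz'
      (lt_of_le_of_ne hlt.le.2 fun h => hlt.ne (Prod.ext hy h)) hy

lemma position_le_position_iff (hz : z ∈ D.fibre θ) (hz' : z' ∈ D.fibre θ) :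
    D.position z ≤ D.position z' ↔ z ≤ z' := by
  constructor
  · intro h
    by_contra hle
    have hle' : z' ≤ z := (isChain_fibre.total hz hz').resolve_left hle
    exact (position_lt_position hz' hz (lt_of_le_not_ge hle' hle)).not_ge h
  · rintro h
    rcases h.lt_or_eq with hlt | rfl
    exacts [(position_lt_position hz hz' hlt).le, le_rfl]

lemma continuous_position :
    Continuous fun k : D.totalSpace => D.position k.1.2 := by
  have hsum : Continuous fun k : D.totalSpace => D.weightedSum k.1.2 :=
    continuous_tsum (fun n => continuous_const.mul
      ((continuous_apply n).comp continuous_subtype_val.snd.snd)) D.summable_weight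
      fun n k => abs_weight_mul_le k.2 n
  have hy : Continuous fun k : D.totalSpace => (k.1.2.1 : ℝ) :=
    continuous_subtype_val.comp continuous_subtype_val.snd.fst
  exact hy.add (((hy.sub continuous_const).mul (continuous_const.sub hy)).mul hsum)

variable [IsTopologicalAddGroup Θ]

lemma exists_mem_fibre_position_eq (θ : Θ) (x : Icc a b) : ∃ z ∈ D.fibre θ, D.position z = x := by
  have hab : a ≤ b := x.2.1.trans x.2.2
  obtain ⟨t, ht⟩ := (isConnected_setOf_mem_fibre (D := D) (θ := θ) ⟨a, left_mem_Icc.2 hab⟩).nonempty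
  obtain ⟨t', ht'⟩ :=
    (isConnected_setOf_mem_fibre (D := D) (θ := θ) ⟨b, right_mem_Icc.2 hab⟩).nonempty
  have hmk : Continuous fun z : D.fibre θ => (⟨(θ, z), z.2⟩ : D.totalSpace) := by fun_prop
  have hcont : ContinuousOn D.position (D.fibre θ) :=
    continuousOn_iff_continuous_domRestrict.2 (continuous_position.comp hmk)
  refine isPreconnected_fibre.intermediate_value ht ht' hcont ?_
  simpa only [position, sub_self, zero_mul, mul_zero, add_zero] using x.2

variable (D) in
/-- The fibrewise increasing map that identifies the blown-up cylinder with the original one. -/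
def toCylinder (k : D.totalSpace) : Θ × Icc a b :=
  (k.1.1, ⟨D.position k.1.2, position_mem_Icc k.2⟩)

lemma bijective_toCylinder : Bijective D.toCylinder := by
  refine ⟨?_, fun ⟨θ, x⟩ => ?_⟩
  · rintro ⟨⟨θ, z⟩, hz⟩ ⟨⟨θ', z'⟩, hz'⟩ heq
    obtain rfl : θ = θ' := congrArg Prod.fst heq
    have hpos : D.position z = D.position z' := congrArg (fun p => (p.2 : ℝ)) heq
    obtain rfl : z = z' := ((position_le_position_iff hz hz').1 hpos.le).antisymm
      ((position_le_position_iff hz' hz).1 hpos.ge)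
    rfl
  · obtain ⟨z, hz, hpos⟩ := exists_mem_fibre_position_eq (D := D) θ x
    exact ⟨⟨(θ, z), hz⟩, Prod.ext rfl (Subtype.ext hpos)⟩

variable [CompactSpace Θ] [T2Space Θ]

variable (D) in
/-- `toCylinder` as a homeomorphism. -/
def homeomorph : D.totalSpace ≃ₜ Θ × Icc a b :=
  have : CompactSpace D.totalSpace := isCompact_iff_compactSpace.1 isCompact_totalSpace
  Continuous.homeoOfEquivCompactToT2 (f := Equiv.ofBijective D.toCylinder bijective_toCylinder)
    (continuous_subtype_val.fst.prodMk (continuous_position.subtype_mk _))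

variable (D) in
/-- The point of the blown-up fibre over `q.1` that sits at `q`. -/
def lift (q : Θ × Icc a b) : Icc a b × (ℤ → ℝ) := (D.homeomorph.symm q).1.2

variable {q q' : Θ × Icc a b}

lemma homeomorph_symm_fst (q : Θ × Icc a b) : (D.homeomorph.symm q).1.1 = q.1 :=
  congrArg Prod.fst (D.homeomorph.apply_symm_apply q)

lemma position_lift (q : Θ × Icc a b) : D.position (D.lift q) = q.2 :=
  congrArg (fun p => (p.2 : ℝ)) (D.homeomorph.apply_symm_apply q)

lemma lift_mem_fibre (q : Θ × Icc a b) : D.lift q ∈ D.fibre q.1 := by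
  have hmem : D.lift q ∈ D.fibre (D.homeomorph.symm q).1.1 := (D.homeomorph.symm q).2
  rwa [homeomorph_symm_fst] at hmem

lemma continuous_lift : Continuous D.lift :=
  (continuous_subtype_val.comp D.homeomorph.symm.continuous).snd

lemma lift_homeomorph (k : D.totalSpace) : D.lift (D.homeomorph k) = k.1.2 := by
  rw [lift, D.homeomorph.symm_apply_apply]

lemma exists_lift_eq (hz : z ∈ D.fibre θ) : ∃ x, D.lift (θ, x) = z :=
  ⟨_, lift_homeomorph ⟨(θ, z), hz⟩⟩

lemma lift_le_lift_iff (h : q.1 = q'.1) : D.lift q ≤ D.lift q' ↔ q.2 ≤ q'.2 := by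
  rw [← position_le_position_iff (lift_mem_fibre q) (h ▸ lift_mem_fibre q'), position_lift,
    position_lift, Subtype.coe_le_coe]

lemma eq_of_lift_eq (h : q.1 = q'.1) (hlift : D.lift q = D.lift q') : q = q' :=
  Prod.ext h (((lift_le_lift_iff h).1 hlift.le).antisymm ((lift_le_lift_iff h.symm).1 hlift.ge))

end BlowUpData

/-! ### The extension and its factor map -/

lemma range_zsmul_subset_curveGraph {Θ : Type*} [AddCommGroup Θ] {I : Set ℝ} (ρ : Θ)
    (γ : Θ → I) : (range fun n : ℤ => (n • ρ, γ (n • ρ))) ⊆ curveGraph γ :=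
  range_subset_iff.2 fun _ => rfl

namespace BlowUpData

variable {Θ : Type*} [AddCommGroup Θ] [TopologicalSpace Θ] {a b : ℝ} {ρ : Θ}
  {f : Θ × Icc a b → Θ × Icc a b} {γ : Θ → Icc a b} (D : BlowUpData ρ f γ)

variable (f) in
/-- The map between the fibres of the blown-up cylinder over `θ` and `θ + ρ`. -/
def shift (θ : Θ) (z : Icc a b × (ℤ → ℝ)) : Icc a b × (ℤ → ℝ) :=
  ((f (θ, z.1)).2, fun n => z.2 (n - 1))

variable {D} {θ : Θ} {z z' : Icc a b × (ℤ → ℝ)} {n : ℤ} {x x' : Icc a b} {t : ℝ}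
  {q q' : Θ × Icc a b}

include D in
lemma shift_le_shift_iff : shift f θ z ≤ shift f θ z' ↔ z ≤ z' :=
  and_congr (D.forcedIncreasing.2.2 θ).le_iff_le
    ⟨fun h n => by simpa [shift] using h (n + 1), fun h n => h (n - 1)⟩

lemma map_mk (D : BlowUpData ρ f γ) (θ : Θ) (y : Icc a b) :
    (θ + ρ, (f (θ, y)).2) = f (θ, y) :=
  Prod.ext (D.forcedIncreasing.2.1 (θ, y)).symm rfl

lemma shift_mem_fibre (hz : z ∈ D.fibre θ) : shift f θ z ∈ D.fibre (θ + ρ) := by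
  intro n
  have hbase : θ + ρ - n • ρ = θ - (n - 1) • ρ := by
    rw [sub_smul, one_smul]
    abel
  have hheight : D.height n (θ + ρ, (shift f θ z).1) = D.height (n - 1) (θ, z.1) := by
    have hsucc := D.isHeightFamily.succ_apply (n - 1) (θ, z.1)
    rwa [sub_add_cancel, ← D.map_mk] at hsucc
  rw [hbase, hheight]
  exact hz (n - 1)

lemma update_mem_fibre (hz : z ∈ D.fibre (n • ρ)) (hy : z.1 = γ (n • ρ)) (ht : t ∈ Icc (-1) 1) :
    (z.1, update z.2 n t) ∈ D.fibre (n • ρ) := by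
  intro m
  rcases eq_or_ne m n with rfl | hm
  · dsimp only
    rw [update_self, sub_self, num_zero, D.isJump.den_eq_zero.2 rfl, height_eq_zero.2 hy,
      jumpSet_zero_zero_zero]
    exact ht
  · dsimp only
    rw [update_of_ne hm]
    exact hz m

lemma le_iff_snd_apply_le (hz : z ∈ D.fibre (n • ρ)) (hz' : z' ∈ D.fibre (n • ρ))
    (hy : z.1 = z'.1) : z ≤ z' ↔ z.2 n ≤ z'.2 n := by
  refine ⟨fun h => h.2 n, fun h => ⟨hy.le, fun m => ?_⟩⟩
  rcases eq_or_ne m n with rfl | hm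
  · exact h
  · exact (snd_apply_eq_of_mem_fibre hz hz' hy fun h' => hm (D.zsmul_injective h'.1.symm)).le

variable [IsTopologicalAddGroup Θ] [CompactSpace Θ] [T2Space Θ]

variable (D) in
/-- The factor map `h` of the blow-up. -/
def factor (q : Θ × Icc a b) : Θ × Icc a b := (q.1, (D.lift q).1)

variable (D) in
/-- The extension `f̂` of `f` obtained by the blow-up. -/
def extension (q : Θ × Icc a b) : Θ × Icc a b :=
  D.homeomorph ⟨(q.1 + ρ, shift f q.1 (D.lift q)), shift_mem_fibre (lift_mem_fibre q)⟩

lemma lift_extension (q : Θ × Icc a b) : D.lift (D.extension q) = shift f q.1 (D.lift q) :=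
  lift_homeomorph _

lemma continuous_factor : Continuous D.factor :=
  continuous_fst.prodMk continuous_lift.fst

lemma continuous_extension : Continuous D.extension := by
  have hshift : Continuous fun q => shift f q.1 (D.lift q) :=
    (D.forcedIncreasing.1.comp (continuous_fst.prodMk continuous_lift.fst)).snd.prodMk
      (continuous_pi fun n => (continuous_apply (n - 1)).comp continuous_lift.snd)
  exact D.homeomorph.continuous.comp
    (((continuous_fst.add continuous_const).prodMk hshift).subtype_mk _)

lemma forcedIncreasing_extension : ForcedIncreasing (· + ρ) D.extension := by
  refine ⟨continuous_extension, fun _ => rfl, fun θ => strictMono_of_le_iff_le fun x x' => ?_⟩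
  have hfst : (D.extension (θ, x)).1 = (D.extension (θ, x')).1 := rfl
  rw [← lift_le_lift_iff hfst, lift_extension, lift_extension, D.shift_le_shift_iff]
  exact (lift_le_lift_iff (D := D) (q := (θ, x)) (q' := (θ, x')) rfl).symm

lemma surjective_factor : Surjective D.factor := fun ⟨θ, y⟩ => by
  obtain ⟨t, ht⟩ := (isConnected_setOf_mem_fibre (D := D) (θ := θ) y).nonempty
  obtain ⟨x, hx⟩ := exists_lift_eq ht
  exact ⟨(θ, x), by rw [factor, hx]⟩

lemma isFactorMap_factor : IsFactorMap D.extension f D.factor := by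
  refine ⟨continuous_factor, surjective_factor, funext fun q => ?_⟩
  exact Prod.ext (D.forcedIncreasing.2.1 (D.factor q)).symm (congrArg Prod.fst (lift_extension q))

lemma monotone_factor (θ : Θ) : Monotone fun x => (D.factor (θ, x)).2 :=
  fun x x' hx => ((lift_le_lift_iff (D := D) (q := (θ, x)) (q' := (θ, x')) rfl).2 hx).1

lemma eq_of_factor_eq (h : D.factor q = D.factor q')
    (hq : D.factor q ∉ range fun n : ℤ => (n • ρ, γ (n • ρ))) : q = q' := by
  obtain ⟨hfst, hy⟩ : q.1 = q'.1 ∧ (D.lift q).1 = (D.lift q').1 := Prod.ext_iff.1 h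
  refine eq_of_lift_eq hfst (Prod.ext hy (funext fun n => ?_))
  refine snd_apply_eq_of_mem_fibre (lift_mem_fibre q) (hfst ▸ lift_mem_fibre q') hy ?_
  rintro ⟨hn, hγ⟩
  exact hq ⟨n, Prod.ext hn.symm ((congrArg γ hn.symm).trans hγ.symm)⟩

lemma exists_factor_eq_and_lift_snd_eq (n : ℤ) (ht : t ∈ Icc (-1) 1) :
    ∃ x, D.factor (n • ρ, x) = (n • ρ, γ (n • ρ)) ∧ (D.lift (n • ρ, x)).2 n = t := by
  obtain ⟨s, hs⟩ := (isConnected_setOf_mem_fibre (D := D) (γ (n • ρ))).nonempty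
  obtain ⟨x, hx⟩ := exists_lift_eq (update_mem_fibre hs rfl ht)
  exact ⟨x, by rw [factor, hx], by rw [hx]; exact update_self n t s⟩

lemma le_iff_lift_snd_le (h : D.factor (n • ρ, x) = D.factor (n • ρ, x')) :
    x ≤ x' ↔ (D.lift (n • ρ, x)).2 n ≤ (D.lift (n • ρ, x')).2 n := by
  rw [← le_iff_snd_apply_le (lift_mem_fibre (n • ρ, x)) (lift_mem_fibre (n • ρ, x'))
    (congrArg Prod.snd h)]
  exact (lift_le_lift_iff (D := D) (q := (n • ρ, x)) (q' := (n • ρ, x')) rfl).symm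

lemma exists_preimage_factor_eq_segment (n : ℤ) : ∃ x₁ x₂, x₁ < x₂ ∧
    D.factor ⁻¹' {(n • ρ, γ (n • ρ))} = {n • ρ} ×ˢ Icc x₁ x₂ := by
  obtain ⟨x₁, hx₁, ht₁⟩ := exists_factor_eq_and_lift_snd_eq (D := D) n
    (left_mem_Icc.2 (neg_le_self zero_le_one))
  obtain ⟨x₂, hx₂, ht₂⟩ := exists_factor_eq_and_lift_snd_eq (D := D) n
    (right_mem_Icc.2 (neg_le_self zero_le_one))
  refine ⟨x₁, x₂, ?_, ?_⟩
  · rw [← not_le, le_iff_lift_snd_le (hx₂.trans hx₁.symm), ht₁, ht₂]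
    norm_num
  · ext ⟨θ, x⟩
    constructor
    · intro hx
      obtain rfl : θ = n • ρ := congrArg Prod.fst hx
      have hbound := abs_le.1 (lift_mem_fibre (D := D) (n • ρ, x) n).1
      exact ⟨rfl, (le_iff_lift_snd_le (hx₁.trans hx.symm)).2 (ht₁.trans_le hbound.1),
        (le_iff_lift_snd_le (hx.trans hx₂.symm)).2 (hbound.2.trans_eq ht₂.symm)⟩
    · rintro ⟨rfl, hle₁, hle₂⟩
      have h₁ := monotone_factor (D := D) (n • ρ) hle₁
      have h₂ := monotone_factor (D := D) (n • ρ) hle₂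
      simp only [hx₁, hx₂] at h₁ h₂
      exact Prod.ext rfl (h₂.antisymm h₁)

lemma exists_preimage_factor_eq_singleton {p : Θ × Icc a b}
    (hp : p ∉ range fun n : ℤ => (n • ρ, γ (n • ρ))) : ∃ x, D.factor ⁻¹' {p} = {(p.1, x)} := by
  obtain ⟨q, rfl⟩ := surjective_factor (D := D) p
  refine ⟨q.2, Subset.antisymm (fun q' hq' => ?_) (singleton_subset_iff.2 rfl)⟩
  exact (eq_of_factor_eq hq'.symm hp).symm

lemma blowUpConclusion
    (hcurve : ∀ η : Θ → Icc a b, Continuous η → ¬curveGraph η ⊆ D.factor ⁻¹' curveGraph γ) :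
    BlowUpConclusion (· + ρ) f γ D.extension D.factor := by
  refine ⟨isFactorMap_factor, fun _ => rfl, forcedIncreasing_extension, monotone_factor,
    fun q hq q' _ h => eq_of_factor_eq h fun hn => hq (range_zsmul_subset_curveGraph ρ γ hn),
    ⟨_, range_zsmul_subset_curveGraph ρ γ, countable_range _, ?_, fun p hp =>
      exists_preimage_factor_eq_singleton hp.2⟩, hcurve⟩
  rintro _ ⟨n, rfl⟩
  exact exists_preimage_factor_eq_segment n

end BlowUpData

/-! ### The minimal set above the curve -/

lemma exists_mem_closure_of_mem_closure {Θ Y : Type*} [TopologicalSpace Θ] [TopologicalSpace Y]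
    [CompactSpace Y] {P : Set (Θ × Y)} (hP : Prod.fst '' P = univ) {A : Set Θ} {θ : Θ}
    (hθ : θ ∈ closure A) : ∃ y, (θ, y) ∈ closure (P ∩ Prod.fst ⁻¹' A) := by
  have himage : Prod.fst '' closure (P ∩ Prod.fst ⁻¹' A) = closure A := by
    rw [← isClosedMap_fst_of_compactSpace.closure_image_eq_of_continuous continuous_fst,
      image_inter_preimage, hP, univ_inter]
  obtain ⟨⟨θ, y⟩, hy, rfl⟩ : θ ∈ Prod.fst '' closure (P ∩ Prod.fst ⁻¹' A) := himage ▸ hθ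
  exact ⟨y, hy⟩

lemma mem_filledEnvelope_of_mem_Icc {Θ : Type*} {a b : ℝ} {M : Set (Θ × Icc a b)} {θ : Θ}
    {x x₁ x₂ : Icc a b} (h₁ : (θ, x₁) ∈ M) (h₂ : (θ, x₂) ∈ M) (hx : x ∈ Icc x₁ x₂) :
    (θ, x) ∈ FilledEnvelope M := by
  have hsub : fiberSet M θ ⊆ Icc a b := by
    rintro _ ⟨y, -, rfl⟩
    exact y.2
  exact ⟨(csInf_le (bddBelow_Icc.mono hsub) ⟨x₁, h₁, rfl⟩).trans hx.1,
    le_trans (Subtype.coe_le_coe.2 hx.2) (le_csSup (bddAbove_Icc.mono hsub) ⟨x₂, h₂, rfl⟩)⟩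

/-- The base points outside the orbit of `0` under the rotation by `ρ`. -/
def regularBase {Θ : Type*} [AddCommGroup Θ] (ρ : Θ) : Set Θ := (range fun n : ℤ => n • ρ)ᶜ

section RegularBase

variable {Θ : Type*} [AddCommGroup Θ] {ρ : Θ}

lemma zero_notMem_regularBase : (0 : Θ) ∉ regularBase ρ :=
  not_not_intro ⟨0, zero_smul ℤ ρ⟩

lemma mapsTo_add_right_regularBase : MapsTo (· + ρ) (regularBase ρ) (regularBase ρ) := by
  rintro θ hθ ⟨n, hn⟩
  exact hθ ⟨n - 1, (sub_one_zsmul ρ n).trans (by simpa using congrArg (· + -ρ) hn)⟩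

lemma dense_regularBase [TopologicalSpace Θ] [ContinuousAdd Θ] [T1Space Θ] [BaireSpace Θ]
    (h₀ : ¬IsOpen ({0} : Set Θ)) : Dense (regularBase ρ) := by
  have hnotOpen : ∀ θ : Θ, ¬IsOpen {θ} := fun θ hθ => by
    have hpre : (· + θ) ⁻¹' {θ} = {0} := by
      ext x
      exact add_eq_right
    exact h₀ (hpre ▸ hθ.preimage (continuous_add_const θ))
  have heq : regularBase ρ = ⋂ n : ℤ, {n • ρ}ᶜ := by
    rw [← compl_iUnion, iUnion_singleton_eq_range]
    rfl
  rw [heq]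
  exact dense_iInter_of_isOpen (fun _ => isOpen_compl_singleton) fun n =>
    dense_compl_singleton_iff_not_open.2 (hnotOpen (n • ρ))

end RegularBase

namespace BlowUpData

section

variable {Θ : Type*} [AddCommGroup Θ] [TopologicalSpace Θ] [IsTopologicalAddGroup Θ]
  [CompactSpace Θ] [T2Space Θ] {a b : ℝ} {ρ : Θ} {f : Θ × Icc a b → Θ × Icc a b}
  {γ : Θ → Icc a b} (D : BlowUpData ρ f γ)

/-- The preimage `h⁻¹(Γ)` of the curve in the blow-up. -/
def curvePreimage : Set (Θ × Icc a b) := D.factor ⁻¹' curveGraph γ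

/-- The minimal set of the extension in the preimage of the curve, as the closure of the part of
that preimage which is a graph. -/
def minimalSet : Set (Θ × Icc a b) := closure (D.curvePreimage ∩ Prod.fst ⁻¹' regularBase ρ)

variable {D} {q : Θ × Icc a b}

lemma isClosed_curvePreimage : IsClosed D.curvePreimage :=
  (isClosed_eq continuous_snd (D.continuous_curve.comp continuous_fst)).preimage
    continuous_factor

lemma minimalSet_subset_curvePreimage : D.minimalSet ⊆ D.curvePreimage :=
  closure_minimal inter_subset_left isClosed_curvePreimage

lemma image_fst_curvePreimage : Prod.fst '' D.curvePreimage = univ := by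
  refine eq_univ_of_forall fun θ => ?_
  obtain ⟨q, hq⟩ := surjective_factor (D := D) (θ, γ θ)
  refine ⟨q, ?_, congrArg Prod.fst hq⟩
  rw [curvePreimage, mem_preimage, hq]
  rfl

lemma mapsTo_extension_curvePreimage :
    MapsTo D.extension D.curvePreimage D.curvePreimage := by
  intro q hq
  have hlift : (D.lift q).1 = γ q.1 := hq
  change (D.lift (D.extension q)).1 = γ (q.1 + ρ)
  rw [lift_extension, shift, hlift, D.map_curve]

lemma injOn_fst_curvePreimage_regularBase :
    InjOn Prod.fst (D.curvePreimage ∩ Prod.fst ⁻¹' regularBase ρ) := by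
  rintro q ⟨hq, hreg⟩ q' ⟨hq', -⟩ hfst
  have hfactor : D.factor q = D.factor q' :=
    Prod.ext hfst (hq.trans ((congrArg γ hfst).trans hq'.symm))
  refine eq_of_factor_eq hfactor ?_
  rintro ⟨n, hn⟩
  exact hreg ⟨n, congrArg Prod.fst hn⟩

lemma lift_snd_zero_mem_jumpSet (hq : q ∈ D.curvePreimage) :
    (D.lift q).2 0 ∈ jumpSet (D.num q.1) (D.den q.1) 0 := by
  have hmem := lift_mem_fibre (D := D) q 0
  have hlift : (D.lift q).1 = γ q.1 := hq
  rwa [height_eq_zero.2 hlift, zero_smul, sub_zero] at hmem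

lemma lift_snd_zero_mem_of_mem_closure {A : Set Θ} {C : Set ℝ} (hC : IsClosed C)
    (hAC : ∀ θ ∈ A, |D.num θ| = D.den θ → jumpSet (D.num θ) (D.den θ) 0 ⊆ C)
    (hq : q ∈ closure (D.curvePreimage ∩ Prod.fst ⁻¹' A)) (hq₀ : q.1 = 0) :
    (D.lift q).2 0 ∈ C := by
  have hclosed : IsClosed {p | (D.lift p).2 0 ∈ C} :=
    hC.preimage ((continuous_apply 0).comp continuous_lift.snd)
  have hnear : ∀ᶠ p in 𝓝 q, |D.num p.1| = D.den p.1 :=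
    continuous_fst.continuousAt.eventually (hq₀ ▸ D.isJump.eventually_abs_num_eq)
  refine hclosed.closure_subset (mem_closure_iff_frequently.2 ?_)
  exact ((mem_closure_iff_frequently.1 hq).and_eventually hnear).mono fun p hp =>
    hAC p.1 hp.1.2 hp.2 (lift_snd_zero_mem_jumpSet hp.1.1)

lemma abs_lift_snd_zero_eq_one (hq : q ∈ D.minimalSet) (hq₀ : q.1 = 0) :
    |(D.lift q).2 0| = 1 := by
  refine lift_snd_zero_mem_of_mem_closure (C := {t | |t| = 1})
    (isClosed_eq continuous_abs continuous_const) (fun θ hθ habs t ht => ?_) hq hq₀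
  have hnum : D.num θ ≠ 0 := fun h => by
    rw [h, abs_zero, eq_comm, D.isJump.den_eq_zero] at habs
    exact zero_notMem_regularBase (habs ▸ hθ)
  rcases hnum.lt_or_gt with hneg | hpos
  · rw [mem_ofPred_eq, eq_neg_one_of_mem_jumpSet hneg habs ht, abs_neg, abs_one]
  · rw [mem_ofPred_eq, eq_one_of_mem_jumpSet hpos habs ht, abs_one]

lemma exists_mem_minimalSet_lift_snd_zero_eq (hreg : Dense (regularBase ρ)) {A : Set Θ}
    (hA : IsOpen A) (hA₀ : 0 ∈ closure A) {t : ℝ}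
    (hAt : ∀ θ ∈ A, |D.num θ| = D.den θ → jumpSet (D.num θ) (D.den θ) 0 ⊆ {t}) :
    ∃ x, (0, x) ∈ D.minimalSet ∧ (D.lift (0, x)).2 0 = t := by
  have hcl : 0 ∈ closure (A ∩ regularBase ρ) :=
    closure_minimal (hreg.open_subset_closure_inter hA) isClosed_closure hA₀
  obtain ⟨x, hx⟩ := exists_mem_closure_of_mem_closure (image_fst_curvePreimage (D := D)) hcl
  refine ⟨x, closure_mono (inter_subset_inter_right _ (preimage_mono inter_subset_right)) hx, ?_⟩
  exact lift_snd_zero_mem_of_mem_closure isClosed_singleton (fun θ hθ => hAt θ hθ.1) hx rfl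

lemma exists_mem_minimalSet_lift_snd_zero_eq_one (hreg : Dense (regularBase ρ)) :
    ∃ x, (0, x) ∈ D.minimalSet ∧ (D.lift (0, x)).2 0 = 1 :=
  exists_mem_minimalSet_lift_snd_zero_eq hreg
    (isOpen_lt continuous_const D.isJump.continuous_num) D.isJump.zero_mem_closure_pos
    fun _ hθ habs _ ht => eq_one_of_mem_jumpSet hθ habs ht

lemma exists_mem_minimalSet_lift_snd_zero_eq_neg_one (hreg : Dense (regularBase ρ)) :
    ∃ x, (0, x) ∈ D.minimalSet ∧ (D.lift (0, x)).2 0 = -1 :=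
  exists_mem_minimalSet_lift_snd_zero_eq hreg
    (isOpen_lt D.isJump.continuous_num continuous_const) D.isJump.zero_mem_closure_neg
    fun _ hθ habs _ ht => eq_neg_one_of_mem_jumpSet hθ habs ht

lemma not_curveGraph_subset_curvePreimage (hreg : Dense (regularBase ρ)) {η : Θ → Icc a b}
    (hη : Continuous η) : ¬curveGraph η ⊆ D.curvePreimage := by
  intro hsub
  have hgraph : D.minimalSet ⊆ curveGraph η := by
    refine closure_minimal ?_ (isClosed_eq continuous_snd (hη.comp continuous_fst))
    rintro q ⟨hq, hqreg⟩
    have hmem : (q.1, η q.1) ∈ D.curvePreimage := hsub rfl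
    exact congrArg Prod.snd (injOn_fst_curvePreimage_regularBase ⟨hq, hqreg⟩ ⟨hmem, hqreg⟩ rfl)
  obtain ⟨x, hx, ht⟩ := exists_mem_minimalSet_lift_snd_zero_eq_one (D := D) hreg
  obtain ⟨x', hx', ht'⟩ := exists_mem_minimalSet_lift_snd_zero_eq_neg_one (D := D) hreg
  obtain rfl : x = x' := (hgraph hx).trans (hgraph hx').symm
  rw [ht] at ht'
  norm_num at ht'

/-- The preimage of the point of the curve over `0` is a segment, of which the minimal set
contains the two endpoints only. -/
lemma minimalSet_ne_filledEnvelope (hreg : Dense (regularBase ρ)) :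
    D.minimalSet ≠ FilledEnvelope D.minimalSet := by
  obtain ⟨x₂, hx₂, ht₂⟩ := exists_mem_minimalSet_lift_snd_zero_eq_one (D := D) hreg
  obtain ⟨x₁, hx₁, ht₁⟩ := exists_mem_minimalSet_lift_snd_zero_eq_neg_one (D := D) hreg
  obtain ⟨x, hx, ht⟩ := exists_factor_eq_and_lift_snd_eq (D := D) 0 (t := 0) (by norm_num)
  rw [zero_smul] at hx ht
  have hfactor : ∀ {y}, (0, y) ∈ D.minimalSet → D.factor (0, y) = (0, γ 0) := fun hy =>
    Prod.ext rfl (minimalSet_subset_curvePreimage hy)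
  have hle : ∀ {y y'}, D.factor (0, y) = (0, γ 0) → D.factor (0, y') = (0, γ 0) →
      (y ≤ y' ↔ (D.lift (0, y)).2 0 ≤ (D.lift (0, y')).2 0) := fun {y y'} hy hy' => by
    have h := le_iff_lift_snd_le (D := D) (n := 0) (x := y) (x' := y')
    rw [zero_smul] at h
    exact h (hy.trans hy'.symm)
  have hmem : (0, x) ∈ FilledEnvelope D.minimalSet := by
    refine mem_filledEnvelope_of_mem_Icc hx₁ hx₂ ⟨(hle (hfactor hx₁) hx).2 ?_,
      (hle hx (hfactor hx₂)).2 ?_⟩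
    · rw [ht₁, ht]
      norm_num
    · rw [ht, ht₂]
      norm_num
  intro heq
  have habs := abs_lift_snd_zero_eq_one (heq.ge hmem) rfl
  rw [ht, abs_zero] at habs
  exact zero_ne_one habs

lemma pinched_curvePreimage (hreg : (regularBase ρ).Nonempty) : Pinched D.curvePreimage := by
  obtain ⟨θ, hθ⟩ := hreg
  obtain ⟨⟨θ, x⟩, hx, rfl⟩ : θ ∈ Prod.fst '' D.curvePreimage := by
    rw [image_fst_curvePreimage]
    exact mem_univ θ
  exact ⟨θ, x, hx, fun x' hx' =>
    congrArg Prod.snd (injOn_fst_curvePreimage_regularBase ⟨hx', hθ⟩ ⟨hx, hθ⟩ rfl)⟩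

lemma isMinimalSet_minimalSet (hρ : DenseRange fun n : ℕ => n • ρ)
    (hreg : (regularBase ρ).Nonempty) : IsMinimalSet D.extension D.minimalSet :=
  isMinimalSet_closure_inter_preimage_fst hρ (fun _ => rfl) continuous_extension
    injOn_fst_curvePreimage_regularBase isClosed_curvePreimage
    (image_nonempty.1 (image_fst_curvePreimage (D := D) ▸ univ_nonempty))
    mapsTo_extension_curvePreimage hreg mapsTo_add_right_regularBase

lemma eq_minimalSet (hρ : DenseRange fun n : ℕ => n • ρ) (hreg : (regularBase ρ).Nonempty)
    {M : Set (Θ × Icc a b)} (hsub : M ⊆ D.curvePreimage) (hM : IsMinimalSet D.extension M) :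
    M = D.minimalSet :=
  (isMinimalSet_minimalSet hρ hreg).eq_closure_inter_preimage_fst hρ (fun _ => rfl)
    injOn_fst_curvePreimage_regularBase hM hsub

end

section

variable {Θ : Type} [NormedAddCommGroup Θ] [CompactSpace Θ] {a b : ℝ} {ρ : Θ}
  {f : Θ × Icc a b → Θ × Icc a b} {γ : Θ → Icc a b} {D : BlowUpData ρ f γ}

lemma isAAMinimal_minimalSet (hρ : DenseRange fun n : ℕ => n • ρ)
    (hreg : Dense (regularBase ρ)) : IsAAMinimal D.extension D.minimalSet :=
  isAAMinimal_of_injOn_fst hρ (fun _ => rfl) (isMinimalSet_minimalSet hρ hreg.nonempty) hreg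
    (injOn_fst_curvePreimage_regularBase.mono
      (inter_subset_inter_left _ minimalSet_subset_curvePreimage))

lemma not_isAPMinimal_minimalSet (hρ : DenseRange fun n : ℕ => n • ρ)
    (hreg : Dense (regularBase ρ)) : ¬IsAPMinimal D.extension D.minimalSet := by
  intro hAP
  have hclosed : IsClosed D.minimalSet := isClosed_closure
  obtain ⟨θ, hθ⟩ := hreg.nonempty
  have hsing : {x | (θ, x) ∈ D.minimalSet}.Subsingleton := fun x hx x' hx' =>
    congrArg Prod.snd (injOn_fst_curvePreimage_regularBase
      ⟨minimalSet_subset_curvePreimage hx, hθ⟩ ⟨minimalSet_subset_curvePreimage hx', hθ⟩ rfl)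
  obtain ⟨η, hη, hsub⟩ := exists_continuous_curveGraph_subset hclosed.isCompact
    (hAP.injOn_fst hρ (fun _ => rfl) hsing)
    (image_fst_eq_univ_of_mapsTo hρ (g := D.extension) (fun _ => rfl) hclosed hAP.1.1
      hAP.1.mapsTo)
  exact not_curveGraph_subset_curvePreimage hreg hη (hsub.trans minimalSet_subset_curvePreimage)

end

end BlowUpData

/-! ### Rotations of infinite order -/

lemma IsJump.not_isOpen_singleton_zero {Θ : Type*} [TopologicalSpace Θ] [Zero Θ] {u v : Θ → ℝ}
    (h : IsJump u v) : ¬IsOpen ({0} : Set Θ) := by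
  intro hopen
  obtain ⟨θ, rfl, hθ⟩ := mem_closure_iff.1 h.zero_mem_closure_pos {0} hopen rfl
  exact hθ.ne' h.num_zero

lemma injective_zsmul_of_denseRange_nsmul {Θ : Type*} [AddCommGroup Θ] [TopologicalSpace Θ]
    [T1Space Θ] {ρ : Θ} (hρ : DenseRange fun n : ℕ => n • ρ) (h₀ : ¬IsOpen ({0} : Set Θ)) :
    Injective fun n : ℤ => n • ρ := by
  rw [injective_zsmul_iff_not_isOfFinAddOrder]
  intro hfin
  have hrange : (range fun n : ℕ => n • ρ).Finite := hfin.finite_multiples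
  have : Finite Θ := finite_univ_iff.1 (by rwa [← hρ.closure_range, hrange.isClosed.closure_eq])
  exact h₀ (isOpen_discrete _)

lemma nonempty_blowUpData {Θ : Type*} [AddCommGroup Θ] [TopologicalSpace Θ]
    [IsTopologicalAddGroup Θ] [T1Space Θ] {a b : ℝ} {ρ : Θ}
    (hρ : DenseRange fun n : ℕ => n • ρ) {u v : Θ → ℝ} (huv : IsJump u v)
    {f : Θ × Icc a b → Θ × Icc a b} (hf : ForcedIncreasing (fun θ => θ + ρ) f)
    {γ : Θ → Icc a b} (hγc : Continuous γ) (hγint : ∀ θ, (γ θ : ℝ) ∈ interior (Icc a b))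
    (hγinv : ∀ θ, f (θ, γ θ) = (θ + ρ, γ (θ + ρ))) : Nonempty (BlowUpData ρ f γ) := by
  obtain ⟨w, hw⟩ := exists_isHeightFamily ((γ 0).2.1.trans (γ 0).2.2)
    (α := Homeomorph.addRight ρ) hf hγc hγinv
  obtain ⟨c, hc, hsum, hlt⟩ := exists_pos_summable_mul_tsum_lt_one ℤ (b - a)
  exact ⟨{
    zsmul_injective := injective_zsmul_of_denseRange_nsmul hρ huv.not_isOpen_singleton_zero
    forcedIncreasing := hf
    continuous_curve := hγc
    curve_mem_Ioo := fun θ => interior_Icc.le (hγint θ)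
    map_curve := hγinv
    num := u
    den := v
    isJump := huv
    height := w
    isHeightFamily := hw
    weight := c
    weight_pos := hc
    summable_weight := hsum
    tsum_weight_lt := hlt }⟩

theorem stmt4_general {Θ : Type} [NormedAddCommGroup Θ] [CompactSpace Θ] {ρ : Θ}
    (hρ : DenseRange fun n : ℕ => n • ρ) {u v : Θ → ℝ} (huv : IsJump u v)
    {I : Set ℝ} (hIcomp : IsCompact I) (hIconn : I.OrdConnected)
    {f : Θ × I → Θ × I} (hf : ForcedIncreasing (fun θ => θ + ρ) f)
    {γ : Θ → I} (hγc : Continuous γ) (hγint : ∀ θ, (γ θ : ℝ) ∈ interior I)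
    (hγinv : ∀ θ, f (θ, γ θ) = (θ + ρ, γ (θ + ρ))) :
    ∃ fhat h : Θ × I → Θ × I,
      BlowUpConclusion (fun θ => θ + ρ) f γ fhat h ∧ Pinched (h ⁻¹' curveGraph γ) ∧
      ∃ M : Set (Θ × I), M ⊆ h ⁻¹' curveGraph γ ∧ IsMinimalSet fhat M ∧
        (∀ M' : Set (Θ × I), M' ⊆ h ⁻¹' curveGraph γ → IsMinimalSet fhat M' → M' = M) ∧
        IsAAMinimal fhat M ∧ ¬IsAPMinimal fhat M ∧ M ≠ FilledEnvelope M := by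
  obtain ⟨a, b, rfl⟩ : ∃ a b, I = Icc a b :=
    ⟨_, _, eq_Icc_of_connected_compact ⟨⟨γ 0, (γ 0).2⟩, hIconn.isPreconnected⟩ hIcomp⟩
  have hreg : Dense (regularBase ρ) := dense_regularBase huv.not_isOpen_singleton_zero
  obtain ⟨D⟩ := nonempty_blowUpData hρ huv hf hγc hγint hγinv
  exact ⟨D.extension, D.factor,
    BlowUpData.blowUpConclusion fun _ => BlowUpData.not_curveGraph_subset_curvePreimage hreg,
    BlowUpData.pinched_curvePreimage hreg.nonempty,
    D.minimalSet, BlowUpData.minimalSet_subset_curvePreimage,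
    BlowUpData.isMinimalSet_minimalSet hρ hreg.nonempty,
    fun _ => BlowUpData.eq_minimalSet hρ hreg.nonempty,
    BlowUpData.isAAMinimal_minimalSet hρ hreg,
    BlowUpData.not_isAPMinimal_minimalSet hρ hreg,
    BlowUpData.minimalSet_ne_filledEnvelope hreg⟩

/-! ### Irrational rotations of the circle -/

section Circle

/-- An odd continuous function on the circle equal to `2 t` at the class of small `t`. -/
def circleSlope (θ : T1) : ℝ := ‖θ + ((1 / 4 : ℝ) : T1)‖ - ‖θ - ((1 / 4 : ℝ) : T1)‖

lemma T1.norm_coe_of_abs_le {t : ℝ} (ht : |t| ≤ 1 / 2) : ‖(t : T1)‖ = |t| :=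
  (AddCircle.norm_coe_eq_abs_iff 1 one_ne_zero).2 (by rwa [abs_one])

lemma circleSlope_coe {t : ℝ} (ht : |t| ≤ 1 / 4) : circleSlope t = 2 * t := by
  obtain ⟨hlo, hhi⟩ := abs_le.1 ht
  rw [circleSlope, ← AddCircle.coe_add, ← AddCircle.coe_sub,
    T1.norm_coe_of_abs_le (abs_le.2 ⟨by linarith, by linarith⟩),
    T1.norm_coe_of_abs_le (abs_le.2 ⟨by linarith, by linarith⟩),
    abs_of_nonneg (by linarith), abs_of_nonpos (by linarith)]
  ring

lemma abs_circleSlope_le (θ : T1) : |circleSlope θ| ≤ 2 * ‖θ‖ := by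
  calc |circleSlope θ| = |‖θ + ((1 / 4 : ℝ) : T1)‖ - ‖((1 / 4 : ℝ) : T1) - θ‖| := by
        rw [circleSlope, norm_sub_rev θ]
    _ ≤ ‖θ + ((1 / 4 : ℝ) : T1) - (((1 / 4 : ℝ) : T1) - θ)‖ := abs_norm_sub_norm_le _ _
    _ = ‖θ + θ‖ := by congr 1; abel
    _ ≤ 2 * ‖θ‖ := (norm_add_le θ θ).trans_eq (two_mul _).symm

lemma T1.nhds_zero_eq_map_coe : 𝓝 (0 : T1) = map ((↑) : ℝ → T1) (𝓝 0) :=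
  QuotientAddGroup.nhds_eq _ (0 : ℝ)

lemma eventually_circleSlope_coe : ∀ᶠ t : ℝ in 𝓝 0, circleSlope t = 2 * t := by
  filter_upwards [Metric.closedBall_mem_nhds (0 : ℝ) (show (0 : ℝ) < 1 / 4 by norm_num)] with t ht
  exact circleSlope_coe (by rwa [← Real.norm_eq_abs, ← mem_closedBall_zero_iff])

lemma isJump_circleSlope : IsJump circleSlope fun θ => 2 * ‖θ‖ where
  continuous_num := (continuous_id.add continuous_const).norm.sub
    (continuous_id.sub continuous_const).norm
  continuous_den := continuous_const.mul continuous_norm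
  abs_num_le := abs_circleSlope_le
  den_eq_zero := (mul_eq_zero_iff_left two_ne_zero).trans norm_eq_zero
  eventually_abs_num_eq := by
    rw [T1.nhds_zero_eq_map_coe, eventually_map]
    filter_upwards [eventually_circleSlope_coe,
      Metric.closedBall_mem_nhds (0 : ℝ) (show (0 : ℝ) < 1 / 2 by norm_num)] with t ht hball
    rw [mem_closedBall_zero_iff, Real.norm_eq_abs] at hball
    rw [ht, T1.norm_coe_of_abs_le hball, abs_mul, abs_two]
  zero_mem_closure_pos := by
    rw [mem_closure_iff_frequently, T1.nhds_zero_eq_map_coe, frequently_map]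
    refine ((frequently_gt_nhds (0 : ℝ)).and_eventually eventually_circleSlope_coe).mono ?_
    exact fun t ht => by simpa only [mem_ofPred_eq, ht.2] using mul_pos two_pos ht.1
  zero_mem_closure_neg := by
    rw [mem_closure_iff_frequently, T1.nhds_zero_eq_map_coe, frequently_map]
    refine ((frequently_lt_nhds (0 : ℝ)).and_eventually eventually_circleSlope_coe).mono ?_
    exact fun t ht => by
      simpa only [mem_ofPred_eq, ht.2] using mul_neg_of_pos_of_neg two_pos ht.1

end Circle

lemma denseRange_nsmul_coe_of_irrational {ρ : ℝ} (hρ : Irrational ρ) :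
    DenseRange fun n : ℕ => n • (ρ : T1) :=
  denseRange_zsmul_iff_nsmul.1 (AddCircle.denseRange_zsmul_coe_iff.2 (by rwa [div_one]))

/-- in the blow-up construction, `h⁻¹(Γ)` contains exactly one minimal set;
it is almost automorphic, not almost periodic, and not filled-in. -/
theorem stmt4 {I : Set ℝ} (hIcomp : IsCompact I) (hIconn : I.OrdConnected)
    (ρ : ℝ) (hρ : Irrational ρ)
    (f : T1 × ↥I → T1 × ↥I) (hf : ForcedIncreasing (fun θ : T1 => θ + (ρ : T1)) f)
    (γ : T1 → ↥I) (hγc : Continuous γ) (hγint : ∀ θ : T1, (γ θ : ℝ) ∈ interior I)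
    (hγinv : ∀ θ : T1, f (θ, γ θ) = (θ + (ρ : T1), γ (θ + (ρ : T1)))) :
    ∃ fhat h : T1 × ↥I → T1 × ↥I,
      BlowUpConclusion (fun θ : T1 => θ + (ρ : T1)) f γ fhat h ∧
      Pinched (h ⁻¹' curveGraph γ) ∧
      ∃ M : Set (T1 × ↥I), M ⊆ h ⁻¹' curveGraph γ ∧ IsMinimalSet fhat M ∧
        (∀ M' : Set (T1 × ↥I), M' ⊆ h ⁻¹' curveGraph γ → IsMinimalSet fhat M' → M' = M) ∧
        IsAAMinimal fhat M ∧ ¬ IsAPMinimal fhat M ∧ M ≠ FilledEnvelope M :=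
  stmt4_general (denseRange_nsmul_coe_of_irrational hρ) isJump_circleSlope hIcomp hIconn hf
    hγc hγint hγinv

end
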